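/- arXiv:1211.1998 — 2 statements merged into one kernel-verified Lean document; each statement's English description precedes it below -/
import Mathlib

section
/- Let S be a set and let R be a symmetrized subset of the free group F(S) satisfying the metric C′(1/6) small-cancellation condition, i.e. every piece p relative to R occurring in a reduced factorization r = p·v with r ∈ R satisfies 6·|p| < |r|. Then the presented group G = ⟨S | R⟩ contains no subgroup isomorphic to F₂ × F₂, where F₂ denotes the free group on two generators. -/
/-- Length of the reduced word of an element of a free group. -/
def FG.len {S : Type*} [DecidableEq S] (g : FreeGroup S) : ℕ :=
  g.toWord.length

/-- `r` is cyclically reduced: every conjugate is at least as long. -/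
def FG.CyclicallyReduced {S : Type*} [DecidableEq S] (r : FreeGroup S) : Prop :=
  ∀ g : FreeGroup S, FG.len r ≤ FG.len (g⁻¹ * r * g)

/-- `R` is a symmetrized subset: every element is nontrivial and cyclically
reduced, `R` is closed under inversion and under cyclic permutation. -/
def FG.Symmetrized {S : Type*} [DecidableEq S] (R : Set (FreeGroup S)) : Prop :=
  (∀ r ∈ R, r ≠ 1 ∧ FG.CyclicallyReduced r) ∧
  (∀ r ∈ R, r⁻¹ ∈ R) ∧
  (∀ r ∈ R, ∀ u v : FreeGroup S,
      r = u * v → FG.len r = FG.len u + FG.len v → v * u ∈ R)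

/-- `p` is a piece relative to `R`. -/
def FG.IsPiece {S : Type*} [DecidableEq S] (R : Set (FreeGroup S))
    (p : FreeGroup S) : Prop :=
  p ≠ 1 ∧
  ∃ r₁ ∈ R, ∃ r₂ ∈ R, r₁ ≠ r₂ ∧
    (∃ v₁ : FreeGroup S, r₁ = p * v₁ ∧ FG.len r₁ = FG.len p + FG.len v₁) ∧
    (∃ v₂ : FreeGroup S, r₂ = p * v₂ ∧ FG.len r₂ = FG.len p + FG.len v₂)

/-- The C(6) small-cancellation condition: no relator is a reduced
concatenation of at most 5 pieces. -/
def FG.C6 {S : Type*} [DecidableEq S] (R : Set (FreeGroup S)) : Prop :=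
  ¬ ∃ r ∈ R, ∃ ps : List (FreeGroup S),
      ps.length ≤ 5 ∧ (∀ p ∈ ps, FG.IsPiece R p) ∧
      r = ps.prod ∧ FG.len r = (ps.map FG.len).sum

/-- The metric C′(1/6) small-cancellation condition: every piece occurring
as a reduced prefix of a relator is shorter than one sixth of the relator. -/
def FG.CPrimeSixth {S : Type*} [DecidableEq S] (R : Set (FreeGroup S)) : Prop :=
  ∀ r ∈ R, ∀ p v : FreeGroup S, FG.IsPiece R p →
    r = p * v → FG.len r = FG.len p + FG.len v → 6 * FG.len p < FG.len r

set_option linter.unusedSectionVars false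
set_option linter.unusedSimpArgs false
namespace SC
open Equiv

section Perm
variable {D : Type} [Fintype D] [DecidableEq D]

/-- number of classes of the equivalence relation generated by `r` -/
noncomputable def N {D : Type} (r : D → D → Prop) : ℤ := (Nat.card (Quot r) : ℤ)

def adj {D : Type} (r : D → D → Prop) (p q : D) : D → D → Prop := fun a b => r a b ∨ (a = p ∧ b = q)

def cyc {D : Type} (σ : Perm D) : D → D → Prop := fun a b => σ a = b
def orb {D : Type} (σ τ : Perm D) : D → D → Prop := fun a b => σ a = b ∨ τ a = b

lemma N_le_of {r r' : D → D → Prop} (h : ∀ a b, r a b → Quot.mk r' a = Quot.mk r' b) :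
    N r' ≤ N r := by
  classical
  unfold N
  have : Function.Surjective (Quot.lift (fun a => Quot.mk r' a) h) := by
    rintro ⟨a⟩; exact ⟨Quot.mk r a, rfl⟩
  exact_mod_cast Nat.card_le_card_of_surjective _ this

lemma N_adj_le (r : D → D → Prop) (p q : D) : N (adj r p q) ≤ N r :=
  N_le_of fun _ _ h => Quot.sound (Or.inl h)

lemma N_le_adj (r : D → D → Prop) (p q : D) : N r ≤ N (adj r p q) + 1 := by
  classical
  let f : D → Quot r := fun a => if Quot.mk r a = Quot.mk r p then Quot.mk r q else Quot.mk r a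
  have hf : ∀ a b, adj r p q a b → f a = f b := by
    rintro a b (h | ⟨rfl, rfl⟩)
    · have := Quot.sound h
      simp only [f, this]
    · simp [f]
  let F : Option (Quot (adj r p q)) → Quot r := fun o => o.elim (Quot.mk r p) (Quot.lift f hf)
  have hF : Function.Surjective F := by
    rintro ⟨a⟩
    by_cases h : Quot.mk r a = Quot.mk r p
    · exact ⟨none, h.symm⟩
    · exact ⟨some (Quot.mk _ a), by simp [F, f, h]⟩
  have := Nat.card_le_card_of_surjective _ hF
  rw [Finite.card_option] at this
  unfold N
  exact_mod_cast this

lemma N_adj_eq {r : D → D → Prop} {p q : D} (h : Quot.mk r p = Quot.mk r q) :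
    N (adj r p q) = N r := by
  apply le_antisymm (N_adj_le _ _ _)
  apply N_le_of
  rintro a b (h' | ⟨rfl, rfl⟩)
  · exact Quot.sound h'
  · exact h

lemma N_adj_lt {r : D → D → Prop} {p q : D} (h : Quot.mk r p ≠ Quot.mk r q) :
    N (adj r p q) + 1 ≤ N r := by
  classical
  let f : Quot r → Quot (adj r p q) :=
    Quot.lift (fun a => Quot.mk _ a) (fun a b h => Quot.sound (Or.inl h))
  have hs : Function.Surjective f := by
    rintro ⟨a⟩; exact ⟨Quot.mk r a, rfl⟩
  have hle := Nat.card_le_card_of_surjective _ hs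
  have hne : Nat.card (Quot r) ≠ Nat.card (Quot (adj r p q)) := by
    intro he
    have hb := (Nat.bijective_iff_surjective_and_card f).2 ⟨hs, he⟩
    exact h (hb.1 (Quot.sound (Or.inr ⟨rfl, rfl⟩)))
  unfold N
  have : Nat.card (Quot (adj r p q)) + 1 ≤ Nat.card (Quot r) := by omega
  exact_mod_cast this

lemma mk_of_same {σ : Perm D} {r : D → D → Prop} (hr : ∀ a, Quot.mk r a = Quot.mk r (σ a))
    {p q : D} (h : σ.SameCycle p q) : Quot.mk r p = Quot.mk r q := by
  obtain ⟨i, rfl⟩ := h.exists_nat_pow_eq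
  induction i with
  | zero => rfl
  | succ n ih => rw [pow_succ', Perm.mul_apply, ← hr]; exact ih ⟨n, by simp⟩

lemma same_of_mk {σ : Perm D} {p q : D} (h : Quot.mk (cyc σ) p = Quot.mk (cyc σ) q) :
    σ.SameCycle p q := by
  have := Quot.eqvGen_exact h
  induction this with
  | rel x y h1 => rw [← (show σ x = y from h1)]; exact Perm.sameCycle_apply_right.2 (Perm.SameCycle.refl _ _)
  | refl x => exact Perm.SameCycle.refl _ _
  | symm x y _ ih => exact (ih (Quot.eqvGen_sound (by assumption))).symm
  | trans x y z h1 h2 ih1 ih2 => exact (ih1 (Quot.eqvGen_sound h1)).trans (ih2 (Quot.eqvGen_sound h2))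

lemma mk_iff {σ : Perm D} {p q : D} : Quot.mk (cyc σ) p = Quot.mk (cyc σ) q ↔ σ.SameCycle p q :=
  ⟨same_of_mk, mk_of_same fun _ => Quot.sound rfl⟩

lemma diff_merge {σ : Perm D} {p q : D} (h : ¬ σ.SameCycle p q) :
    (σ * swap p q).SameCycle p q := by
  have key : ∀ j : ℕ, (σ * swap p q).SameCycle p ((σ ^ (j+1)) q) := by
    intro j
    induction j with
    | zero =>
      have : (σ * swap p q) p = σ q := by simp
      simp only [zero_add, pow_one]
      rw [← this]; exact Perm.sameCycle_apply_right.2 (Perm.SameCycle.refl _ _)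
    | succ j ih =>
      rw [pow_succ', Perm.mul_apply]
      set y := (σ ^ (j+1)) q with hy
      by_cases hq : y = q
      · rw [hq]
        have : (σ * swap p q) p = σ q := by simp
        rw [← this]; exact Perm.sameCycle_apply_right.2 (Perm.SameCycle.refl _ _)
      · have hp : y ≠ p := by
          intro hp
          exact h (Perm.SameCycle.symm ⟨(j+1 : ℕ), by rw [zpow_natCast, ← hy, hp]⟩)
        have : (σ * swap p q) y = σ y := by
          rw [Perm.mul_apply, swap_apply_of_ne_of_ne hp hq]
        rw [← this]; exact Perm.sameCycle_apply_right.2 ih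
  have ho := key (orderOf σ - 1)
  rwa [Nat.sub_add_cancel (orderOf_pos σ), pow_orderOf_eq_one] at ho

lemma same_split {σ : Perm D} {p q : D} (hpq : p ≠ q) (h : σ.SameCycle p q) :
    ¬ (σ * swap p q).SameCycle p q := by
  intro h'
  have hex : ∃ k : ℕ, 0 < k ∧ (σ ^ k) p = q := by
    obtain ⟨i, hi⟩ := h.exists_nat_pow_eq
    refine ⟨i, Nat.pos_of_ne_zero ?_, hi⟩
    rintro rfl; exact hpq (by simpa using hi)
  classical
  set k := Nat.find hex with hk
  obtain ⟨hk0, hkq⟩ := Nat.find_spec hex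
  rw [← hk] at hk0 hkq
  have hmin : ∀ i, 0 < i → i < k → (σ ^ i) p ≠ q := fun i h0 hi he => Nat.find_min hex hi ⟨h0, he⟩
  have hT : ∀ n : ℕ, ∃ i, 1 ≤ i ∧ i ≤ k ∧ ((σ * swap p q) ^ n) q = (σ ^ i) p := by
    intro n
    induction n with
    | zero => exact ⟨k, hk0, le_rfl, by simp [hkq]⟩
    | succ n ih =>
      obtain ⟨i, h1, h2, h3⟩ := ih
      rw [pow_succ', Perm.mul_apply, h3]
      by_cases hi : i = k
      · refine ⟨1, le_rfl, hk0, ?_⟩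
        rw [hi, hkq]; simp
      · refine ⟨i+1, by omega, by omega, ?_⟩
        have hq : (σ ^ i) p ≠ q := hmin i h1 (by omega)
        have hp : (σ ^ i) p ≠ p := by
          intro he
          have : (σ ^ (k - i)) p = q := by
            rw [← hkq]
            conv_rhs => rw [show k = (k - i) + i by omega, pow_add, Perm.mul_apply, he]
          exact hmin (k - i) (by omega) (by omega) this
        rw [Perm.mul_apply, swap_apply_of_ne_of_ne hp hq, pow_succ', Perm.mul_apply]
  obtain ⟨n, hn⟩ := h'.symm.exists_nat_pow_eq
  obtain ⟨i, h1, h2, h3⟩ := hT n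
  rw [hn] at h3
  by_cases hi : i = k
  · rw [hi, hkq] at h3; exact hpq h3
  · have : (σ ^ (k - i)) p = q := by
      rw [← hkq]
      conv_rhs => rw [show k = (k - i) + i by omega, pow_add, Perm.mul_apply, ← h3]
    exact hmin (k - i) (by omega) (by omega) this

/-- number of cycles -/
noncomputable def z {D : Type} (σ : Perm D) : ℤ := N (cyc σ)
/-- number of components -/
noncomputable def cc {D : Type} (σ τ : Perm D) : ℤ := N (orb σ τ)

lemma adj_cyc (σ : Perm D) (p q : D) :
    N (adj (cyc (σ * swap p q)) p q) = N (adj (cyc σ) p q) := by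
  have key : ∀ σ : Perm D, N (adj (cyc σ) p q) ≤ N (adj (cyc (σ * swap p q)) p q) := by
    intro σ
    apply N_le_of
    have hpq : Quot.mk (adj (cyc σ) p q) p = Quot.mk (adj (cyc σ) p q) q :=
      Quot.sound (Or.inr ⟨rfl, rfl⟩)
    have hs : ∀ a, Quot.mk (adj (cyc σ) p q) a = Quot.mk (adj (cyc σ) p q) (σ a) :=
      fun a => Quot.sound (Or.inl rfl)
    rintro a b (h | ⟨rfl, rfl⟩)
    · unfold cyc at h; subst h
      by_cases ha : a = p
      · subst ha; simp [hpq, ← hs]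
      by_cases hb : a = q
      · subst hb; simp [hpq, ← hs]
      · rw [Perm.mul_apply, swap_apply_of_ne_of_ne ha hb]; exact hs a
    · exact hpq
  apply le_antisymm _ (key σ)
  have := key (σ * swap p q)
  rwa [mul_assoc, swap_mul_self, mul_one] at this

lemma adj_orb (φ σ : Perm D) (p q : D) :
    N (adj (orb φ (σ * swap p q)) p q) = N (adj (orb φ σ) p q) := by
  have key : ∀ σ : Perm D, N (adj (orb φ σ) p q) ≤ N (adj (orb φ (σ * swap p q)) p q) := by
    intro σ
    apply N_le_of
    have hpq : Quot.mk (adj (orb φ σ) p q) p = Quot.mk (adj (orb φ σ) p q) q :=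
      Quot.sound (Or.inr ⟨rfl, rfl⟩)
    have hs : ∀ a, Quot.mk (adj (orb φ σ) p q) a = Quot.mk (adj (orb φ σ) p q) (σ a) :=
      fun a => Quot.sound (Or.inl (Or.inr rfl))
    rintro a b ((h | h) | ⟨rfl, rfl⟩)
    · exact Quot.sound (Or.inl (Or.inl h))
    · subst h
      by_cases ha : a = p
      · subst ha; simp [hpq, ← hs]
      by_cases hb : a = q
      · subst hb; simp [hpq, ← hs]
      · rw [Perm.mul_apply, swap_apply_of_ne_of_ne ha hb]; exact hs a
    · exact hpq
  apply le_antisymm _ (key σ)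
  have := key (σ * swap p q)
  rwa [mul_assoc, swap_mul_self, mul_one] at this

lemma z_same {σ : Perm D} {p q : D} (hpq : p ≠ q) (h : σ.SameCycle p q) :
    z σ + 1 ≤ z (σ * swap p q) := by
  have h1 := N_adj_lt (fun h' => same_split hpq h (mk_iff.1 h'))
  rw [adj_cyc, N_adj_eq (mk_iff.2 h)] at h1
  exact h1

lemma z_diff (σ : Perm D) (p q : D) : z σ - 1 ≤ z (σ * swap p q) := by
  have h1 := N_le_adj (cyc σ) p q
  rw [← adj_cyc] at h1
  have := N_adj_le (cyc (σ * swap p q)) p q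
  unfold z; omega

lemma cc_le_succ (φ α : Perm D) (p q : D) : cc φ (α * swap p q) ≤ cc φ α + 1 := by
  have h1 := N_le_adj (orb φ (α * swap p q)) p q
  rw [adj_orb] at h1
  have := N_adj_le (orb φ α) p q
  unfold cc; omega

lemma mk_orb_of_same {φ α : Perm D} {p q : D} (h : α.SameCycle p q ∨ (φ * α).SameCycle p q) :
    Quot.mk (orb φ α) p = Quot.mk (orb φ α) q := by
  have ha : ∀ a, Quot.mk (orb φ α) a = Quot.mk (orb φ α) (α a) := fun a => Quot.sound (Or.inr rfl)
  have hp : ∀ a, Quot.mk (orb φ α) a = Quot.mk (orb φ α) (φ a) := fun a => Quot.sound (Or.inl rfl)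
  rcases h with h | h
  · exact mk_of_same ha h
  · exact mk_of_same (fun a => by rw [Perm.mul_apply, ← hp, ← ha]) h

lemma cc_adj {φ α : Perm D} {p q : D} (h : ¬ α.SameCycle p q ∨ ¬ (φ * α).SameCycle p q) :
    cc φ (α * swap p q) = N (adj (orb φ α) p q) := by
  have : Quot.mk (orb φ (α * swap p q)) p = Quot.mk (orb φ (α * swap p q)) q := by
    apply mk_orb_of_same
    rcases h with h | h
    · exact Or.inl (diff_merge h)
    · right; rw [← mul_assoc]; exact diff_merge h
  unfold cc
  rw [← N_adj_eq this, adj_orb]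

/-- twice the total genus -/
noncomputable def gen (φ α : Perm D) : ℤ :=
  2 * cc φ α + Fintype.card D - z φ - z α - z (φ * α)

lemma gen_swap_le {φ α : Perm D} {p q : D} (hpq : p ≠ q)
    (h : α.SameCycle p q ∨ (φ * α).SameCycle p q) : gen φ (α * swap p q) ≤ gen φ α := by
  unfold gen
  rw [← mul_assoc]
  by_cases h1 : α.SameCycle p q
  · by_cases h2 : (φ * α).SameCycle p q
    · have := z_same hpq h1
      have := z_same hpq h2
      have := cc_le_succ φ α p q
      omega
    · have := z_same hpq h1
      have := z_diff (φ * α) p q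
      have := cc_adj (Or.inr h2)
      have := N_adj_le (orb φ α) p q
      unfold cc at *; omega
  · have h2 := h.resolve_left h1
    have := z_same hpq h2
    have := z_diff α p q
    have := cc_adj (φ := φ) (Or.inl h1)
    have := N_adj_le (orb φ α) p q
    unfold cc at *; omega

lemma gen_swap_le_two {φ α : Perm D} {p q : D} (hpq : p ≠ q) :
    gen φ (α * swap p q) ≤ gen φ α + 2 := by
  by_cases h : α.SameCycle p q ∨ (φ * α).SameCycle p q
  · have := gen_swap_le hpq h; omega
  · push Not at h
    unfold gen
    rw [← mul_assoc]
    have := z_diff (φ * α) p q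
    have := z_diff α p q
    have := cc_adj (φ := φ) (Or.inl h.1)
    have := N_adj_le (orb φ α) p q
    unfold cc at *; omega

lemma gen_swap_diff {φ α : Perm D} {p q : D} (h : Quot.mk (orb φ α) p ≠ Quot.mk (orb φ α) q) :
    gen φ (α * swap p q) ≤ gen φ α := by
  have h1 : ¬ α.SameCycle p q := fun h' => h (mk_orb_of_same (Or.inl h'))
  unfold gen
  rw [← mul_assoc]
  have := z_diff (φ * α) p q
  have := z_diff α p q
  have := cc_adj (φ := φ) (Or.inl h1)
  have := N_adj_lt h
  unfold cc at *; omega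

lemma z_mul_comm (φ α : Perm D) : z (φ * α) = z (α * φ) := by
  have key : ∀ φ α : Perm D, z (φ * α) ≤ z (α * φ) := by
    intro φ α
    unfold z N
    have : Function.Surjective (Quot.lift (r := cyc (α * φ)) (fun a => Quot.mk (cyc (φ * α)) (φ a))
      (by rintro a b rfl; exact Quot.sound rfl)) := by
      rintro ⟨a⟩; exact ⟨Quot.mk _ (φ.symm a), by simp⟩
    exact_mod_cast Nat.card_le_card_of_surjective _ this
  exact le_antisymm (key _ _) (key _ _)

lemma gen_comm (φ α : Perm D) : gen φ α = gen α φ := by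
  have : orb φ α = orb α φ := by ext; unfold orb; tauto
  unfold gen cc
  rw [z_mul_comm, this]; ring

lemma z_one : z (1 : Perm D) = Fintype.card D := by
  unfold z N
  have : Function.Bijective (Quot.mk (cyc (1 : Perm D))) := by
    refine ⟨fun a b h => ?_, Quot.mk_surjective⟩
    simpa using mk_iff.1 h
  rw [← Nat.card_eq_of_bijective _ this, Nat.card_eq_fintype_card]

lemma gen_nonneg (φ α : Perm D) : 0 ≤ gen φ α := by
  induction' hn : α.support.card using Nat.strong_induction_on with n ih generalizing α
  by_cases h : α = 1
  · subst h
    have : cc φ 1 = z φ := by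
      apply le_antisymm
      · apply N_le_of; rintro a b rfl; exact Quot.sound (Or.inl rfl)
      · apply N_le_of; rintro a b (rfl | rfl)
        · exact Quot.sound rfl
        · rfl
    unfold gen
    rw [this, z_one, mul_one]; omega
  · obtain ⟨x, hx⟩ : ∃ x, α x ≠ x := by
      by_contra hh; push Not at hh; exact h (Perm.ext hh)
    have hlt := Perm.card_support_swap_mul hx
    have h0 := ih _ (hn ▸ hlt) _ rfl
    have he : swap x (α x) * α = α * swap (α⁻¹ x) x := by
      rw [Perm.mul_def, Perm.mul_def]
      ext y
      simp only [Perm.mul_apply, Equiv.trans_apply]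
      by_cases h1 : y = x
      · subst h1; simp
      by_cases h2 : y = α⁻¹ x
      · subst h2; simp
      · rw [swap_apply_of_ne_of_ne h2 h1, swap_apply_of_ne_of_ne]
        · intro h; exact h2 (by simp [← h])
        · intro h; exact h1 (α.injective h)
    rw [he] at h0
    refine h0.trans (gen_swap_le ?_ (Or.inl ?_))
    · intro hh; apply hx; conv_lhs => rw [← hh]
      simp
    · exact ⟨1, by simp⟩

lemma N_sum {D₁ D₂ : Type} [Fintype D₁] [Fintype D₂] (E : D₁ ⊕ D₂ ≃ D)
    {r : D → D → Prop} {r₁ : D₁ → D₁ → Prop} {r₂ : D₂ → D₂ → Prop}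
    (h : ∀ u v, r (E u) (E v) ↔ Sum.LiftRel r₁ r₂ u v) : N r = N r₁ + N r₂ := by
  unfold N
  have f : Quot r ≃ Quot r₁ ⊕ Quot r₂ :=
    { toFun := Quot.lift (fun d => Sum.map (Quot.mk r₁) (Quot.mk r₂) (E.symm d)) (by
        intro a b hab
        obtain ⟨u, rfl⟩ := E.surjective a
        obtain ⟨v, rfl⟩ := E.surjective b
        rw [h] at hab
        cases hab with
        | inl h => simp [Quot.sound h]
        | inr h => simp [Quot.sound h])
      invFun := Sum.elim (Quot.lift (fun a => Quot.mk r (E (Sum.inl a)))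
          (fun a b hab => Quot.sound ((h _ _).2 (Sum.LiftRel.inl hab))))
        (Quot.lift (fun a => Quot.mk r (E (Sum.inr a)))
          (fun a b hab => Quot.sound ((h _ _).2 (Sum.LiftRel.inr hab))))
      left_inv := by
        rintro ⟨d⟩
        obtain ⟨u, rfl⟩ := E.surjective d
        rcases u with u | u <;> simp
      right_inv := by
        rintro (d | d) <;> induction d using Quot.ind <;> simp }
  rw [Nat.card_congr f, Nat.card_sum]; push_cast; rfl

lemma gen_sum {D₁ D₂ : Type} [Fintype D₁] [Fintype D₂] [DecidableEq D₁] [DecidableEq D₂]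
    (E : D₁ ⊕ D₂ ≃ D) {φ α : Perm D} {φ₁ α₁ : Perm D₁} {φ₂ α₂ : Perm D₂}
    (h1 : ∀ u, φ (E (Sum.inl u)) = E (Sum.inl (φ₁ u)))
    (h2 : ∀ u, φ (E (Sum.inr u)) = E (Sum.inr (φ₂ u)))
    (h3 : ∀ u, α (E (Sum.inl u)) = E (Sum.inl (α₁ u)))
    (h4 : ∀ u, α (E (Sum.inr u)) = E (Sum.inr (α₂ u))) :
    gen φ α = gen φ₁ α₁ + gen φ₂ α₂ := by
  have a1 : z φ = z φ₁ + z φ₂ := by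
    apply N_sum E; rintro (u | u) (v | v) <;> simp [cyc, h1, h2]
  have a2 : z α = z α₁ + z α₂ := by
    apply N_sum E; rintro (u | u) (v | v) <;> simp [cyc, h3, h4]
  have a3 : z (φ * α) = z (φ₁ * α₁) + z (φ₂ * α₂) := by
    apply N_sum E; rintro (u | u) (v | v) <;> simp [cyc, h1, h2, h3, h4]
  have a4 : cc φ α = cc φ₁ α₁ + cc φ₂ α₂ := by
    apply N_sum E; rintro (u | u) (v | v) <;> simp [orb, h1, h2, h3, h4]
  have a5 : (Fintype.card D : ℤ) = Fintype.card D₁ + Fintype.card D₂ := by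
    rw [← Fintype.card_congr E, Fintype.card_sum]; push_cast; rfl
  unfold gen; rw [a1, a2, a3, a4, a5]; ring

end Perm
end SC

set_option linter.unusedSectionVars false
set_option linter.unusedSimpArgs false
namespace SC
open Equiv Function

section Maps
variable {S : Type*} [DecidableEq S] {K : Type*} [MulAction (FreeGroup S) K]
variable {D : Type} [Fintype D] [DecidableEq D]

def neg (l : S × Bool) : S × Bool := (l.1, !l.2)
def lt (l : S × Bool) : FreeGroup S := FreeGroup.mk [l]

lemma neg_neg (l : S × Bool) : neg (neg l) = l := by simp [neg]
lemma neg_ne (l : S × Bool) : neg l ≠ l := by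
  intro h; have := congrArg Prod.snd h; simp [neg] at this
lemma lt_neg (l : S × Bool) : lt (neg l) = (lt l)⁻¹ := by
  simp [lt, neg, FreeGroup.inv_mk, FreeGroup.invRev]

/-- A closed combinatorial surface, labelled by letters and by points of a Schreier graph. -/
structure Mp (S : Type*) (K : Type*) [MulAction (FreeGroup S) K] (D : Type) where
  φ : Perm D
  e : Perm D
  lam : D → S × Bool
  kap : D → K
  e_inv : ∀ d, e (e d) = d
  e_ne : ∀ d, e d ≠ d
  lam_e : ∀ d, lam (e d) = neg (lam d)
  kap_φ : ∀ d, kap (φ d) = (lt (lam d))⁻¹ • kap d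
  kap_e : ∀ d, kap (e d) = (lt (lam d))⁻¹ • kap d

lemma Mp.kap_ν (M : Mp S K D) (d : D) : M.kap ((M.φ * M.e) d) = M.kap d := by
  rw [Perm.mul_apply, M.kap_φ, M.kap_e, M.lam_e, lt_neg, inv_inv, smul_inv_smul]

lemma Mp.kap_same (M : Mp S K D) {x y : D} (h : (M.φ * M.e).SameCycle x y) :
    M.kap x = M.kap y := by
  obtain ⟨i, rfl⟩ := h.exists_nat_pow_eq
  clear h
  induction i with
  | zero => rfl
  | succ n ih => rw [pow_succ', Perm.mul_apply, M.kap_ν]; exact ih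

lemma flip_step (M : Mp S K D) (Z : Set D) (hZ : ∀ d ∈ Z, M.e d ∈ Z) {x y : D}
    (hx : x ∉ Z) (hy : y ∉ Z) (hxy : x ≠ y) (hl : M.lam x = neg (M.lam y))
    (hs : (M.φ * M.e).SameCycle (M.e y) x) :
    ∃ M' : Mp S K D, M'.φ = M.φ ∧ M'.lam = M.lam ∧ M'.kap = M.kap ∧
      (∀ d ∈ Z, M'.e d = M.e d) ∧ M'.e x = y ∧ gen M'.φ M'.e ≤ gen M.φ M.e := by
  by_cases hexy : M.e x = y
  · exact ⟨M, rfl, rfl, rfl, fun _ _ => rfl, hexy, le_rfl⟩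
  have h1 : x ≠ M.e y := fun h => hexy (by rw [h, M.e_inv])
  have h2 : x ≠ M.e x := (M.e_ne x).symm
  have h3 : y ≠ M.e y := (M.e_ne y).symm
  have h4 : M.e x ≠ M.e y := fun h => hxy (M.e.injective h)
  have ex : M.e (M.e x) = x := M.e_inv x
  have ey : M.e (M.e y) = y := M.e_inv y
  have hkx := M.kap_same hs
  set E : Perm D := M.e * swap x (M.e y) * swap (M.e x) y with hE
  have E1 : E x = y := by
    simp only [hE, Perm.mul_apply]
    rw [swap_apply_of_ne_of_ne h2 hxy, swap_apply_left, ey]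
  have E2 : E y = x := by
    simp only [hE, Perm.mul_apply]
    rw [swap_apply_right, swap_apply_of_ne_of_ne h2.symm h4, ex]
  have E3 : E (M.e x) = M.e y := by
    simp only [hE, Perm.mul_apply]
    rw [swap_apply_left, swap_apply_of_ne_of_ne hxy.symm h3]
  have E4 : E (M.e y) = M.e x := by
    simp only [hE, Perm.mul_apply]
    rw [swap_apply_of_ne_of_ne h4.symm h3.symm, swap_apply_right]
  have E5 : ∀ d, d ≠ x → d ≠ y → d ≠ M.e x → d ≠ M.e y → E d = M.e d := by
    intro d a b c f
    simp only [hE, Perm.mul_apply]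
    rw [swap_apply_of_ne_of_ne c b, swap_apply_of_ne_of_ne a f]
  have hyx : M.lam y = neg (M.lam x) := by rw [hl, neg_neg]
  have cases4 : ∀ d, d = x ∨ d = y ∨ d = M.e x ∨ d = M.e y ∨
      (d ≠ x ∧ d ≠ y ∧ d ≠ M.e x ∧ d ≠ M.e y) := by intro d; tauto
  refine ⟨⟨M.φ, E, M.lam, M.kap, ?_, ?_, ?_, M.kap_φ, ?_⟩, rfl, rfl, rfl, ?_, E1, ?_⟩
  · intro d
    rcases cases4 d with rfl | rfl | rfl | rfl | ⟨a, b, c, f⟩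
    · rw [E1, E2]
    · rw [E2, E1]
    · rw [E3, E4]
    · rw [E4, E3]
    · rw [E5 d a b c f, E5, M.e_inv]
      · intro h; exact c (by rw [← h, M.e_inv])
      · intro h; exact f (by rw [← h, M.e_inv])
      · intro h; exact a (M.e.injective h)
      · intro h; exact b (M.e.injective h)
  · intro d
    rcases cases4 d with rfl | rfl | rfl | rfl | ⟨a, b, c, f⟩
    · rw [E1]; exact hxy.symm
    · rw [E2]; exact hxy
    · rw [E3]; exact h4.symm
    · rw [E4]; exact h4
    · rw [E5 d a b c f]; exact M.e_ne d
  · intro d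
    rcases cases4 d with rfl | rfl | rfl | rfl | ⟨a, b, c, f⟩
    · rw [E1, hyx]
    · rw [E2, hl]
    · rw [E3, M.lam_e, M.lam_e, hyx]
    · rw [E4, M.lam_e, M.lam_e, hl]
    · rw [E5 d a b c f]; exact M.lam_e d
  · have ky : M.kap (M.e y) = (lt (M.lam y))⁻¹ • M.kap y := M.kap_e y
    have kx : M.kap (M.e x) = (lt (M.lam x))⁻¹ • M.kap x := M.kap_e x
    have hlx : lt (M.lam x) = (lt (M.lam y))⁻¹ := by rw [hl, lt_neg]
    have kyx : M.kap x = (lt (M.lam y))⁻¹ • M.kap y := by rw [← hkx, ky]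
    intro d
    rcases cases4 d with rfl | rfl | rfl | rfl | ⟨a, b, c, f⟩
    · rw [E1, hlx, kyx]; simp
    · rw [E2, kyx]
    · rw [E3, M.lam_e, lt_neg, inv_inv, kx, smul_inv_smul, hkx]
    · rw [E4, M.lam_e, lt_neg, inv_inv, ky, smul_inv_smul, kx, hlx, kyx]; simp
    · rw [E5 d a b c f]; exact M.kap_e d
  · intro d hd
    apply E5
    · rintro rfl; exact hx hd
    · rintro rfl; exact hy hd
    · rintro rfl; exact hx (by have := hZ _ hd; rwa [ex] at this)
    · rintro rfl; exact hy (by have := hZ _ hd; rwa [ey] at this)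
  · show gen M.φ E ≤ _
    have s1 : gen M.φ (M.e * swap x (M.e y)) ≤ gen M.φ M.e :=
      gen_swap_le h1 (Or.inr hs.symm)
    have s2 : gen M.φ E ≤ gen M.φ (M.e * swap x (M.e y)) := by
      refine gen_swap_le hexy (Or.inl (Perm.SameCycle.symm ⟨2, ?_⟩))
      rw [zpow_ofNat, pow_two]
      simp only [Perm.mul_apply]
      rw [swap_apply_of_ne_of_ne hxy.symm h3, swap_apply_right]
    exact s2.trans s1

/-- the label of the face, read from the dart `d` -/
noncomputable def word {D : Type} (φ : Perm D) (lam : D → S × Bool) (d : D) : List (S × Bool) :=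
  (List.range (minimalPeriod φ d)).map (fun i => lam (φ^[i] d))

lemma per_pos (φ : Perm D) (d : D) : 0 < minimalPeriod φ d := by
  apply minimalPeriod_pos_of_mem_periodicPts
  exact ⟨orderOf φ, orderOf_pos φ, by
    rw [IsPeriodicPt, IsFixedPt, ← Perm.coe_pow, pow_orderOf_eq_one]; rfl⟩

lemma transport {D₁ D₂ : Type} {φ₁ : Perm D₁} {φ₂ : Perm D₂} {lam₁ : D₁ → S × Bool}
    {lam₂ : D₂ → S × Bool} (f : D₁ → D₂) (hf : Injective f) (d : D₁)
    (h : ∀ i, φ₂ (f (φ₁^[i] d)) = f (φ₁ (φ₁^[i] d)))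
    (hl : ∀ i, lam₂ (f (φ₁^[i] d)) = lam₁ (φ₁^[i] d)) :
    minimalPeriod φ₂ (f d) = minimalPeriod φ₁ d ∧ word φ₂ lam₂ (f d) = word φ₁ lam₁ d := by
  have hi : ∀ i, φ₂^[i] (f d) = f (φ₁^[i] d) := by
    intro i
    induction i with
    | zero => rfl
    | succ n ih => rw [iterate_succ_apply', iterate_succ_apply', ih, h]
  have hp : minimalPeriod φ₂ (f d) = minimalPeriod φ₁ d := by
    apply Nat.dvd_antisymm
    · apply IsPeriodicPt.minimalPeriod_dvd
      rw [IsPeriodicPt, IsFixedPt, hi, iterate_minimalPeriod]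
    · apply IsPeriodicPt.minimalPeriod_dvd
      apply hf
      rw [← hi, iterate_minimalPeriod]
  refine ⟨hp, ?_⟩
  unfold word
  rw [hp]
  apply List.map_congr_left
  intro i _
  rw [hi, hl]

/-- removing a closed subsurface -/
lemma restrict_map (M : Mp S K D) (X : Finset D) (hφ : ∀ d, M.φ d ∈ X ↔ d ∈ X)
    (he : ∀ d, M.e d ∈ X ↔ d ∈ X) :
    ∃ M' : Mp S K {d // d ∉ X}, gen M'.φ M'.e ≤ gen M.φ M.e ∧
      ∀ d : {d // d ∉ X}, minimalPeriod M'.φ d = minimalPeriod M.φ d.1 ∧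
        word M'.φ M'.lam d = word M.φ M.lam d.1 ∧ M'.kap d = M.kap d.1 := by
  have hφ' : ∀ d, M.φ d ∉ X ↔ d ∉ X := fun d => not_congr (hφ d)
  have he' : ∀ d, M.e d ∉ X ↔ d ∉ X := fun d => not_congr (he d)
  refine ⟨⟨M.φ.subtypePerm hφ', M.e.subtypePerm he', fun d => M.lam d.1, fun d => M.kap d.1,
    fun d => Subtype.ext (M.e_inv d.1), fun d h => M.e_ne d.1 (congrArg Subtype.val h),
    fun d => M.lam_e d.1, fun d => M.kap_φ d.1, fun d => M.kap_e d.1⟩, ?_, ?_⟩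
  · have := gen_sum (Equiv.sumCompl (fun d => d ∈ X)) (φ := M.φ) (α := M.e)
      (φ₁ := M.φ.subtypePerm hφ) (α₁ := M.e.subtypePerm he)
      (φ₂ := M.φ.subtypePerm hφ') (α₂ := M.e.subtypePerm he')
      (by intro u; simp) (by intro u; simp) (by intro u; simp) (by intro u; simp)
    have h0 := gen_nonneg (M.φ.subtypePerm hφ) (M.e.subtypePerm he)
    simp only
    linarith
  · intro d
    have := transport (φ₁ := M.φ.subtypePerm hφ') (φ₂ := M.φ) (lam₁ := fun d => M.lam d.1)
      (lam₂ := M.lam) Subtype.val Subtype.val_injective d (fun i => rfl) (fun i => rfl)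
    exact ⟨this.1.symm, this.2.symm, rfl⟩

end Maps
end SC

set_option linter.unusedSectionVars false
set_option linter.unusedSimpArgs false
namespace SC
open Equiv Function

section Words
variable {S : Type*} [DecidableEq S]

/-- The combinatorial properties of the reduced words representing relators. -/
structure SCW (W : Set (List (S × Bool))) : Prop where
  ne : ∀ w ∈ W, w ≠ []
  red : ∀ w ∈ W, FreeGroup.IsReduced w
  rot : ∀ u v, u ++ v ∈ W → v ++ u ∈ W
  inv : ∀ w ∈ W, FreeGroup.invRev w ∈ W
  piece : ∀ p v₁ v₂, p ≠ [] → p ++ v₁ ∈ W → p ++ v₂ ∈ W → p ++ v₁ ≠ p ++ v₂ →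
    6 * p.length < (p ++ v₁).length

lemma len_mk {w : List (S × Bool)} (h : FreeGroup.IsReduced w) :
    FG.len (FreeGroup.mk w) = w.length := by
  rw [FG.len, FreeGroup.toWord_mk, h.reduce_eq]

lemma len_mk_le (w : List (S × Bool)) : FG.len (FreeGroup.mk w) ≤ w.length :=
  FreeGroup.norm_mk_le

lemma red_of_len {w : List (S × Bool)} (h : w.length ≤ FG.len (FreeGroup.mk w)) :
    FreeGroup.IsReduced w := by
  rw [FreeGroup.isReduced_iff_reduce_eq]
  rw [FG.len, FreeGroup.toWord_mk] at h
  have h1 : (FreeGroup.reduce w).Sublist w := FreeGroup.reduce.red.sublist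
  exact h1.eq_of_length_le h

lemma mk_app (u v : List (S × Bool)) :
    FreeGroup.mk (u ++ v) = FreeGroup.mk u * FreeGroup.mk v := FreeGroup.mul_mk.symm

lemma mk_inj {u v : List (S × Bool)} (hu : FreeGroup.IsReduced u) (hv : FreeGroup.IsReduced v)
    (h : FreeGroup.mk u = FreeGroup.mk v) : u = v := by
  have := FreeGroup.reduce.sound h
  rwa [hu.reduce_eq, hv.reduce_eq] at this

lemma scw_of {R : Set (FreeGroup S)} (hSym : FG.Symmetrized R) (hC' : FG.CPrimeSixth R) :
    SCW {w | FreeGroup.IsReduced w ∧ FreeGroup.mk w ∈ R} := by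
  obtain ⟨h1, h2, h3⟩ := hSym
  constructor
  · rintro w ⟨_, hw⟩ rfl
    exact (h1 _ hw).1 rfl
  · exact fun w hw => hw.1
  · rintro u v ⟨hr, hm⟩
    have ru : FreeGroup.IsReduced u := (List.isChain_append.mp hr).1
    have rv : FreeGroup.IsReduced v := (List.isChain_append.mp hr).2.1
    refine ⟨?_, ?_⟩
    · apply red_of_len
      have := (h1 _ hm).2 (FreeGroup.mk u)
      rw [len_mk hr, mk_app, mul_assoc, mul_assoc, inv_mul_cancel_left, ← mk_app] at this
      simp only [List.length_append] at this ⊢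
      omega
    · rw [mk_app]
      apply h3 _ hm _ _ (mk_app u v)
      rw [len_mk hr, len_mk ru, len_mk rv, List.length_append]
  · rintro w ⟨hr, hm⟩
    refine ⟨?_, ?_⟩
    · rw [FreeGroup.isReduced_iff_reduce_eq, FreeGroup.reduce_invRev, hr.reduce_eq]
    · rw [← FreeGroup.inv_mk]; exact h2 _ hm
  · rintro p v₁ v₂ hp ⟨hr, hm⟩ ⟨hr', hm'⟩ hne
    have rp : FreeGroup.IsReduced p := (List.isChain_append.mp hr).1
    have r1 : FreeGroup.IsReduced v₁ := (List.isChain_append.mp hr).2.1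
    have r2 : FreeGroup.IsReduced v₂ := (List.isChain_append.mp hr').2.1
    have e1 : FG.len (FreeGroup.mk (p ++ v₁)) = FG.len (FreeGroup.mk p) + FG.len (FreeGroup.mk v₁) := by
      rw [len_mk hr, len_mk rp, len_mk r1, List.length_append]
    have e2 : FG.len (FreeGroup.mk (p ++ v₂)) = FG.len (FreeGroup.mk p) + FG.len (FreeGroup.mk v₂) := by
      rw [len_mk hr', len_mk rp, len_mk r2, List.length_append]
    have := hC' _ hm (FreeGroup.mk p) (FreeGroup.mk v₁) ⟨?_, _, hm, _, hm', ?_,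
      ⟨_, mk_app _ _, e1⟩, ⟨_, mk_app _ _, e2⟩⟩ (mk_app _ _) e1
    · rwa [len_mk rp, len_mk hr] at this
    · intro h
      apply hp
      have := len_mk rp
      rw [h] at this
      simpa [FG.len] using this.symm
    · exact fun h => hne (mk_inj hr hr' h)

variable {D : Type} [Fintype D] [DecidableEq D]

lemma per_φ (φ : Perm D) (d : D) : minimalPeriod φ (φ d) = minimalPeriod φ d :=
  minimalPeriod_apply (minimalPeriod_pos_iff_mem_periodicPts.1 (per_pos φ d))

lemma per_iter (φ : Perm D) (d : D) (i : ℕ) : minimalPeriod φ (φ^[i] d) = minimalPeriod φ d := by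
  induction i with
  | zero => rfl
  | succ n ih => rw [iterate_succ_apply', per_φ, ih]

variable (φ : Perm D) (lam : D → S × Bool)

lemma word_length (d : D) : (word φ lam d).length = minimalPeriod φ d := by simp [word]

lemma word_ne (d : D) : word φ lam d ≠ [] := by
  intro h
  have := word_length φ lam d
  rw [h] at this
  have := per_pos φ d
  simp at *; omega

lemma word_get (d : D) (i : ℕ) (h : i < (word φ lam d).length) :
    (word φ lam d)[i] = lam (φ^[i] d) := by simp [word]

lemma word_succ (d : D) : ∃ t, word φ lam d = lam d :: t ∧ word φ lam (φ d) = t ++ [lam d] := by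
  have hp := per_pos φ d
  obtain ⟨n, hn⟩ : ∃ n, minimalPeriod φ d = n + 1 := ⟨minimalPeriod φ d - 1, by omega⟩
  refine ⟨(List.range n).map (fun i => lam (φ^[i+1] d)), ?_, ?_⟩
  · unfold word
    rw [hn, List.range_succ_eq_map, List.map_cons, List.map_map]
    rfl
  · unfold word
    rw [per_φ, hn, List.range_succ, List.map_append]
    congr 1
    simp only [List.map_cons, List.map_nil]
    rw [← iterate_succ_apply, Nat.succ_eq_add_one, ← hn, iterate_minimalPeriod]

lemma word_mem_φ {W : Set (List (S × Bool))} (hW : SCW W) (d : D) (h : word φ lam d ∈ W) :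
    word φ lam (φ d) ∈ W := by
  obtain ⟨t, h1, h2⟩ := word_succ φ lam d
  rw [h2]
  apply hW.rot [lam d] t
  rwa [h1] at h

lemma mk_word_φ (d : D) : FreeGroup.mk (word φ lam (φ d)) =
    (lt (lam d))⁻¹ * FreeGroup.mk (word φ lam d) * lt (lam d) := by
  obtain ⟨t, h1, h2⟩ := word_succ φ lam d
  rw [h2, h1, mk_app, ← List.singleton_append, mk_app]
  show _ = (FreeGroup.mk [lam d])⁻¹ * (FreeGroup.mk [lam d] * FreeGroup.mk t) * FreeGroup.mk [lam d]
  rw [inv_mul_cancel_left, ← FreeGroup.one_eq_mk, mul_one]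

lemma iter_mod (φ : Perm D) (d : D) (m : ℕ) : φ^[m % minimalPeriod φ d] d = φ^[m] d :=
  iterate_mod_minimalPeriod_eq

/-- consecutive letters along a relator face never cancel -/
lemma not_cancel {W : Set (List (S × Bool))} (hW : SCW W) (d : D) (h : word φ lam d ∈ W) :
    lam (φ d) ≠ neg (lam d) := by
  intro hc
  by_cases h1 : minimalPeriod φ d = 1
  · have : φ d = d := by
      have := iterate_minimalPeriod (f := φ) (x := d)
      rwa [h1] at this
    rw [this] at hc
    exact neg_ne _ hc.symm
  · have hp := per_pos φ d
    have hr := hW.red _ h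
    have h0 := word_length φ lam d
    have := List.isChain_iff_getElem.1 hr 0 (by omega)
    rw [word_get, word_get] at this
    simp only [iterate_zero, id, zero_add, iterate_one] at this
    rw [hc] at this
    simp [neg] at this

end Words
end SC

set_option linter.unusedSectionVars false
set_option linter.unusedSimpArgs false
namespace SC
open Equiv Function

section Mirror
variable {S : Type*} [DecidableEq S] {K : Type*} [MulAction (FreeGroup S) K]
variable {D : Type} [Fintype D] [DecidableEq D]

structure AreaData (Nn : Subgroup (FreeGroup S)) (Ψ : K → FreeGroup S → ℤ) : Prop where
  add : ∀ k, ∀ n ∈ Nn, ∀ m ∈ Nn, Ψ k (n * m) = Ψ k n + Ψ k m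
  conj : ∀ k s, ∀ n ∈ Nn, Ψ (s⁻¹ • k) (s⁻¹ * n * s) = Ψ k n

lemma AreaData.one {Nn : Subgroup (FreeGroup S)} {Ψ : K → FreeGroup S → ℤ}
    (h : AreaData Nn Ψ) (k : K) : Ψ k 1 = 0 := by
  have := h.add k 1 Nn.one_mem 1 Nn.one_mem
  simpa using this

lemma AreaData.inv {Nn : Subgroup (FreeGroup S)} {Ψ : K → FreeGroup S → ℤ}
    (h : AreaData Nn Ψ) (k : K) (n : FreeGroup S) (hn : n ∈ Nn) : Ψ k n⁻¹ = - Ψ k n := by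
  have := h.add k n hn n⁻¹ (Nn.inv_mem hn)
  rw [mul_inv_cancel, h.one] at this
  linarith

/-- The contribution of a dart to the area. -/
noncomputable def ar (Ψ : K → FreeGroup S → ℤ) (φ : Perm D) (lam : D → S × Bool) (kap : D → K)
    (d : D) : ℚ :=
  (Ψ (kap d) (FreeGroup.mk (word φ lam d)) : ℚ) / (minimalPeriod φ d : ℚ)

variable {Nn : Subgroup (FreeGroup S)} {Ψ : K → FreeGroup S → ℤ}
variable {W : Set (List (S × Bool))}

lemma ar_φ (hA : AreaData Nn Ψ) (M : Mp S K D) (d : D)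
    (h : FreeGroup.mk (word M.φ M.lam d) ∈ Nn) :
    ar Ψ M.φ M.lam M.kap (M.φ d) = ar Ψ M.φ M.lam M.kap d := by
  unfold ar
  rw [per_φ, mk_word_φ, M.kap_φ, hA.conj _ _ _ h]

lemma symm_iter (φ : Perm D) (i : ℕ) (d : D) : φ.symm^[i] (φ^[i] d) = d :=
  (Function.LeftInverse.iterate (g := φ.symm) (f := φ) φ.left_inv i) d

lemma iter_symm (φ : Perm D) (i : ℕ) (d : D) : φ^[i] (φ.symm^[i] d) = d :=
  (Function.LeftInverse.iterate (g := φ) (f := φ.symm) φ.right_inv i) d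

lemma iter_congr_iff (φ : Perm D) {d : D} {i j : ℕ} : φ^[i] d = φ^[j] d ↔
    i ≡ j [MOD minimalPeriod φ d] := by
  rw [← iter_mod φ d i, ← iter_mod φ d j, iterate_eq_iterate_iff_of_lt_minimalPeriod
    (Nat.mod_lt _ (per_pos φ d)) (Nat.mod_lt _ (per_pos φ d))]
  rfl

lemma iter_congr (φ : Perm D) {d : D} {i j : ℕ} (h : φ^[i] d = φ^[j] d) :
    i ≡ j [MOD minimalPeriod φ d] :=
  (iter_congr_iff φ).1 h

lemma per_symm (φ : Perm D) (d : D) : minimalPeriod φ.symm d = minimalPeriod φ d := by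
  apply Nat.dvd_antisymm
  · apply IsPeriodicPt.minimalPeriod_dvd
    rw [IsPeriodicPt, IsFixedPt]
    have := symm_iter φ (minimalPeriod φ d) d
    rwa [iterate_minimalPeriod] at this
  · apply IsPeriodicPt.minimalPeriod_dvd
    rw [IsPeriodicPt, IsFixedPt]
    have := iter_symm φ (minimalPeriod φ.symm d) d
    rwa [iterate_minimalPeriod] at this

lemma invRev_get (w : List (S × Bool)) (i : ℕ) (h : i < (FreeGroup.invRev w).length)
    (h' : w.length - 1 - i < w.length) :
    (FreeGroup.invRev w)[i] = neg w[w.length - 1 - i] := by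
  simp [FreeGroup.invRev, neg]

/-- mirrored darts: the two faces read inverse words -/
lemma word_mirror (φ : Perm D) (lam : D → S × Bool) (x y : D)
    (hp : minimalPeriod φ x = minimalPeriod φ y)
    (h : ∀ i, lam (φ.symm^[i] y) = neg (lam (φ^[i] x))) :
    word φ lam (φ y) = FreeGroup.invRev (word φ lam x) := by
  apply List.ext_getElem
  · simp [word_length, per_φ, hp]
  · intro i h1 h2
    have hl := word_length φ lam x
    have h3 : i < minimalPeriod φ x := by simpa [hl] using h2
    rw [word_get, invRev_get _ _ _ (by omega), word_get, hl, ← h, ← iterate_succ_apply]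
    congr 1
    apply (φ.injective.iterate (minimalPeriod φ x - 1 - i))
    rw [← iterate_add_apply, iter_symm]
    have : minimalPeriod φ x - 1 - i + i.succ = minimalPeriod φ y := by omega
    rw [this, iterate_minimalPeriod]

lemma mirror_word (φ : Perm D) (lam : D → S × Bool) (x y : D)
    (h : word φ lam x = FreeGroup.invRev (word φ lam (φ y))) :
    minimalPeriod φ x = minimalPeriod φ y ∧ ∀ i, lam (φ.symm^[i] y) = neg (lam (φ^[i] x)) := by
  have hp : minimalPeriod φ x = minimalPeriod φ y := by
    have := congrArg List.length h
    simpa [word_length, per_φ] using this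
  refine ⟨hp, fun i => ?_⟩
  have key : ∀ i, i < minimalPeriod φ x → lam (φ.symm^[i] y) = neg (lam (φ^[i] x)) := by
    intro i hi
    have h1 : i < (word φ lam x).length := by rwa [word_length]
    have e1 : (word φ lam x)[i] = (FreeGroup.invRev (word φ lam (φ y)))[i]'(by rw [← h]; exact h1) := by
      simp only [h]
    have hl := word_length φ lam (φ y)
    rw [per_φ] at hl
    rw [invRev_get _ _ _ (by rw [hl, ← hp]; omega), word_get, word_get] at e1
    rw [e1, neg_neg, hl, ← iterate_succ_apply]
    congr 1
    apply (φ.injective.iterate i)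
    rw [← iterate_add_apply, iter_symm]
    have : i + (minimalPeriod φ y - 1 - i).succ = minimalPeriod φ y := by omega
    rw [this, iterate_minimalPeriod]
  have := key (i % minimalPeriod φ x) (Nat.mod_lt _ (per_pos φ x))
  rw [iter_mod] at this
  rw [← this, hp, ← per_symm φ y, iter_mod]

lemma iter_symm_iter (φ : Perm D) (m i : ℕ) (h : i ≤ m) (d : D) :
    φ.symm^[i] (φ^[m] d) = φ^[m - i] d := by
  apply (φ.injective.iterate i)
  rw [iter_symm, ← iterate_add_apply]
  congr 1; omega

lemma mirror_distinct (hW : SCW W) (φ : Perm D) (lam : D → S × Bool) (x y : D)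
    (hw : ∀ d, word φ lam d ∈ W)
    (h : ∀ i, lam (φ.symm^[i] y) = neg (lam (φ^[i] x))) (m : ℕ) : y ≠ φ^[m] x := by
  intro hy
  have hk : ∀ i, i ≤ m → lam (φ^[m - i] x) = neg (lam (φ^[i] x)) := by
    intro i hi
    rw [← h, hy, iter_symm_iter _ _ _ hi]
  obtain ⟨s, hs | hs⟩ := Nat.even_or_odd' m
  · have := hk s (by omega)
    rw [show m - s = s by omega] at this
    exact neg_ne _ this.symm
  · have := hk s (by omega)
    rw [show m - s = s + 1 by omega, iterate_succ_apply'] at this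
    exact not_cancel φ lam hW _ (hw _) this

lemma mirror_flips (hW : SCW W) (M : Mp S K D) (hw : ∀ d, word M.φ M.lam d ∈ W) (d y : D)
    (hy : M.e d = y)
    (hp : minimalPeriod M.φ d = minimalPeriod M.φ y)
    (h : ∀ i, M.lam (M.φ.symm^[i] y) = neg (M.lam (M.φ^[i] d))) (n : ℕ) :
    ∃ M' : Mp S K D, M'.φ = M.φ ∧ M'.lam = M.lam ∧ M'.kap = M.kap ∧
      gen M'.φ M'.e ≤ gen M.φ M.e ∧ ∀ j ≤ n, M'.e (M.φ^[j] d) = M.φ.symm^[j] y := by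
  have hdist : ∀ i j, M.φ^[i] d ≠ M.φ.symm^[j] y := by
    intro i j hij
    apply mirror_distinct hW M.φ M.lam d y hw h (j + i)
    rw [iterate_add_apply, hij, iter_symm]
  induction n with
  | zero =>
    refine ⟨M, rfl, rfl, rfl, le_rfl, fun j hj => ?_⟩
    obtain rfl : j = 0 := by omega
    exact hy
  | succ n ih =>
    obtain ⟨M', e1, e2, e3, hg, hj⟩ := ih
    have hj' : ∀ j ≤ n, M'.e (M.φ.symm^[j] y) = M.φ^[j] d := by
      intro j hjn; rw [← hj j hjn, M'.e_inv]
    by_cases hc : ∃ j ≤ n, M.φ^[j] d = M.φ^[n+1] d ∨ M.φ.symm^[j] y = M.φ.symm^[n+1] y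
    · obtain ⟨j, hjn, hc⟩ := hc
      have hmod : j ≡ n + 1 [MOD minimalPeriod M.φ d] := by
        rcases hc with hc | hc
        · exact iter_congr _ hc
        · have := iter_congr M.φ.symm hc
          rwa [per_symm, ← hp] at this
      have a1 : M.φ^[j] d = M.φ^[n+1] d :=
        (iter_congr_iff M.φ).2 hmod
      have a2 : M.φ.symm^[j] y = M.φ.symm^[n+1] y := by
        apply (iter_congr_iff M.φ.symm).2
        rwa [per_symm, ← hp]
      refine ⟨M', e1, e2, e3, hg, fun i hi => ?_⟩
      rcases Nat.lt_or_ge n i with hlt | hle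
      · obtain rfl : i = n + 1 := by omega
        rw [← a1, ← a2, hj j hjn]
      · exact hj i hle
    · push Not at hc
      have z1 : ∀ u ∈ {u | ∃ j ≤ n, u = M.φ^[j] d ∨ u = M.φ.symm^[j] y},
          M'.e u ∈ {u | ∃ j ≤ n, u = M.φ^[j] d ∨ u = M.φ.symm^[j] y} := by
        rintro u ⟨j, hjn, rfl | rfl⟩
        · exact ⟨j, hjn, Or.inr (hj j hjn)⟩
        · exact ⟨j, hjn, Or.inl (hj' j hjn)⟩
      have z2 : M.φ^[n+1] d ∉ {u | ∃ j ≤ n, u = M.φ^[j] d ∨ u = M.φ.symm^[j] y} := by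
        rintro ⟨j, hjn, hu | hu⟩
        · exact (hc j hjn).1 hu.symm
        · exact hdist _ _ hu
      have z3 : M.φ.symm^[n+1] y ∉ {u | ∃ j ≤ n, u = M.φ^[j] d ∨ u = M.φ.symm^[j] y} := by
        rintro ⟨j, hjn, hu | hu⟩
        · exact hdist _ _ hu.symm
        · exact (hc j hjn).2 hu.symm
      have z4 : M'.lam (M.φ^[n+1] d) = neg (M'.lam (M.φ.symm^[n+1] y)) := by
        rw [e2, h, neg_neg]
      have z5 : (M'.φ * M'.e).SameCycle (M'.e (M.φ.symm^[n+1] y)) (M.φ^[n+1] d) := by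
        refine ⟨2, ?_⟩
        rw [zpow_ofNat, pow_two]
        simp only [Perm.mul_apply, M'.e_inv]
        rw [iterate_succ_apply' M.φ.symm, e1, apply_symm_apply, hj' n le_rfl, iterate_succ_apply']
      obtain ⟨M'', f1, f2, f3, f4, f5, f6⟩ := flip_step M' _ z1 z2 z3 (hdist _ _) z4 z5
      refine ⟨M'', f1.trans e1, f2.trans e2, f3.trans e3, f6.trans hg, fun i hi => ?_⟩
      rcases Nat.lt_or_ge n i with hlt | hle
      · obtain rfl : i = n + 1 := by omega
        exact f5
      · rw [f4 _ ⟨i, hle, Or.inl rfl⟩]; exact hj i hle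

lemma mirror_remove (hW : SCW W) (hA : AreaData Nn Ψ) (hN : ∀ w ∈ W, FreeGroup.mk w ∈ Nn)
    (M : Mp S K D) (hw : ∀ d, word M.φ M.lam d ∈ W) (d : D)
    (hd : word M.φ M.lam d = FreeGroup.invRev (word M.φ M.lam (M.φ (M.e d)))) :
    ∃ (D' : Type) (_ : Fintype D') (_ : DecidableEq D') (M' : Mp S K D'),
      Fintype.card D' < Fintype.card D ∧ gen M'.φ M'.e ≤ gen M.φ M.e ∧
      (∀ d, word M'.φ M'.lam d ∈ W) ∧
      ∑ d, ar Ψ M'.φ M'.lam M'.kap d = ∑ d, ar Ψ M.φ M.lam M.kap d := by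
  obtain ⟨hp, h⟩ := mirror_word _ _ _ _ hd
  obtain ⟨M1, e1, e2, e3, hg, hj⟩ := mirror_flips hW M hw d _ rfl hp h (minimalPeriod M.φ d)
  have hj1 : ∀ j, M1.e (M.φ^[j] d) = M.φ.symm^[j] (M.e d) := by
    intro j
    rw [← iter_mod M.φ d j, hj _ (Nat.mod_lt _ (per_pos _ _)).le, hp, ← per_symm, iter_mod]
  have hj2 : ∀ j, M1.e (M.φ.symm^[j] (M.e d)) = M.φ^[j] d := by
    intro j; rw [← hj1, M1.e_inv]
  generalize hy : M.e d = y at *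
  classical
  let X : Finset D := Finset.univ.filter
    (fun u => (∃ j, u = M.φ^[j] d) ∨ (∃ j, u = M.φ.symm^[j] y))
  have memX : ∀ u, u ∈ X ↔ (∃ j, u = M.φ^[j] d) ∨ (∃ j, u = M.φ.symm^[j] y) := by
    intro u; simp [X]
  have hφ1 : ∀ u, u ∈ X → M.φ u ∈ X := by
    intro u hu
    rw [memX] at hu ⊢
    rcases hu with ⟨j, rfl⟩ | ⟨j, rfl⟩
    · exact Or.inl ⟨j+1, (iterate_succ_apply' _ _ _).symm⟩
    · right
      cases j with
      | zero =>
        refine ⟨minimalPeriod M.φ.symm y - 1, ?_⟩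
        apply M.φ.symm.injective
        rw [← iterate_succ_apply' M.φ.symm, Nat.succ_eq_add_one, Nat.sub_add_cancel (per_pos _ _),
          iterate_minimalPeriod]
        simp
      | succ j => exact ⟨j, by rw [iterate_succ_apply', apply_symm_apply]⟩
  have hφ2 : ∀ u, M.φ u ∈ X → u ∈ X := by
    intro u hu
    have hit : ∀ i, M.φ^[i] (M.φ u) ∈ X := by
      intro i
      induction i with
      | zero => exact hu
      | succ n ih => rw [iterate_succ_apply']; exact hφ1 _ ih
    have := hit (minimalPeriod M.φ u - 1)
    rwa [← iterate_succ_apply, Nat.succ_eq_add_one, Nat.sub_add_cancel (per_pos _ _),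
      iterate_minimalPeriod] at this
  have he1 : ∀ u, u ∈ X → M1.e u ∈ X := by
    intro u hu
    rw [memX] at hu ⊢
    rcases hu with ⟨j, rfl⟩ | ⟨j, rfl⟩
    · exact Or.inr ⟨j, hj1 j⟩
    · exact Or.inl ⟨j, hj2 j⟩
  have he : ∀ u, M1.e u ∈ X ↔ u ∈ X :=
    fun u => ⟨fun hu => by have := he1 _ hu; rwa [M1.e_inv] at this, he1 u⟩
  obtain ⟨M2, hg2, h2⟩ := restrict_map M1 X (by rw [e1]; exact fun u => ⟨hφ2 u, hφ1 u⟩) he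
  have hw1 : ∀ d, word M1.φ M1.lam d ∈ W := by rw [e1, e2]; exact hw
  refine ⟨{d // d ∉ X}, inferInstance, inferInstance, M2, ?_, hg2.trans hg, ?_, ?_⟩
  · apply Fintype.card_subtype_lt (x := d)
    simp only [not_not]
    exact (memX d).2 (Or.inl ⟨0, rfl⟩)
  · intro u; rw [(h2 u).2.1]; exact hw1 _
  · have s1 : ∀ u : {d // d ∉ X}, ar Ψ M2.φ M2.lam M2.kap u = ar Ψ M1.φ M1.lam M1.kap u.1 := by
      intro u
      obtain ⟨a, b, c⟩ := h2 u
      unfold ar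
      rw [a, b, c]
    rw [Finset.sum_congr rfl (fun u _ => s1 u), ← e1, ← e2, ← e3]
    have a1 : ∀ j, ar Ψ M1.φ M1.lam M1.kap (M1.e (M.φ^[j] d)) =
        - ar Ψ M1.φ M1.lam M1.kap (M.φ^[j] d) := by
      intro j
      rw [← ar_φ hA M1 _ (hN _ (hw1 _))]
      have hk := M1.kap_ν (M.φ^[j] d)
      rw [Perm.mul_apply] at hk
      have hwm : word M1.φ M1.lam (M1.φ (M1.e (M.φ^[j] d))) =
          FreeGroup.invRev (word M1.φ M1.lam (M.φ^[j] d)) := by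
        rw [hj1]
        apply word_mirror
        · rw [e1, per_iter, ← per_symm M.φ (M.φ.symm^[j] y), per_iter, per_symm, hp]
        · intro i
          rw [e1, e2, ← iterate_add_apply, ← iterate_add_apply, h]
      unfold ar
      rw [hwm, hk, per_φ, ← FreeGroup.inv_mk, hA.inv _ _ (hN _ (hw1 _))]
      have : minimalPeriod M1.φ (M1.e (M.φ^[j] d)) = minimalPeriod M1.φ (M.φ^[j] d) := by
        rw [hj1, e1, per_iter, ← per_symm M.φ (M.φ.symm^[j] y), per_iter, per_symm, hp]
      rw [this]
      push_cast
      ring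
    have a2 : ∀ u ∈ X, ar Ψ M1.φ M1.lam M1.kap (M1.e u) = - ar Ψ M1.φ M1.lam M1.kap u := by
      intro u hu
      rw [memX] at hu
      rcases hu with ⟨j, rfl⟩ | ⟨j, rfl⟩
      · exact a1 j
      · have := a1 j
        rw [hj1] at this
        rw [this, hj2, _root_.neg_neg]
    have a3 : ∑ u ∈ X, ar Ψ M1.φ M1.lam M1.kap u = 0 := by
      have b1 : ∑ u ∈ X, ar Ψ M1.φ M1.lam M1.kap (M1.e u) = ∑ u ∈ X, ar Ψ M1.φ M1.lam M1.kap u := by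
        apply Finset.sum_bij' (fun u _ => M1.e u) (fun u _ => M1.e u)
        · exact fun u hu => he1 u hu
        · exact fun u hu => he1 u hu
        · intro u _; exact M1.e_inv u
        · intro u _; exact M1.e_inv u
        · intro u _; rfl
      rw [Finset.sum_congr rfl a2, Finset.sum_neg_distrib] at b1
      linarith
    have a4 := Finset.sum_add_sum_compl X (ar Ψ M1.φ M1.lam M1.kap)
    rw [a3, zero_add] at a4
    rw [← a4]
    symm
    apply Finset.sum_subtype
    simp
end Mirror
end SC

set_option linter.unusedSectionVars false
set_option linter.unusedSimpArgs false
namespace SC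
open Equiv Function

section Curv
variable {S : Type*} [DecidableEq S] {K : Type*} [MulAction (FreeGroup S) K]
variable {D : Type} [Fintype D] [DecidableEq D]

lemma z_eq_sum (σ : Perm D) : (z σ : ℚ) = ∑ d, (1 : ℚ) / (minimalPeriod σ d : ℚ) := by
  classical
  have : Fintype (Quot (cyc σ)) := Fintype.ofFinite _
  rw [← Finset.sum_fiberwise (s := Finset.univ) (g := fun d => Quot.mk (cyc σ) d)]
  have key : ∀ q : Quot (cyc σ), ∑ d ∈ Finset.univ.filter (fun d => Quot.mk (cyc σ) d = q),
      (1 : ℚ) / (minimalPeriod σ d : ℚ) = 1 := by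
    rintro ⟨x⟩
    have hset : Finset.univ.filter (fun d => Quot.mk (cyc σ) d = Quot.mk (cyc σ) x) =
        (Finset.range (minimalPeriod σ x)).image (fun i => σ^[i] x) := by
      ext d
      simp only [Finset.mem_filter, Finset.mem_univ, true_and, Finset.mem_image, Finset.mem_range]
      rw [mk_iff]
      constructor
      · intro h
        obtain ⟨i, hi⟩ := h.symm.exists_nat_pow_eq
        refine ⟨i % minimalPeriod σ x, Nat.mod_lt _ (per_pos σ x), ?_⟩
        rw [iter_mod, ← hi, Perm.coe_pow]
      · rintro ⟨i, _, rfl⟩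
        exact Perm.SameCycle.symm ⟨i, by rw [zpow_natCast, Perm.coe_pow]⟩
    have h1 : ∀ d ∈ Finset.univ.filter (fun d => Quot.mk (cyc σ) d = Quot.mk (cyc σ) x),
        (1 : ℚ) / (minimalPeriod σ d : ℚ) = 1 / (minimalPeriod σ x : ℚ) := by
      intro d hd
      rw [hset, Finset.mem_image] at hd
      obtain ⟨i, _, rfl⟩ := hd
      rw [per_iter]
    rw [Finset.sum_congr rfl h1, Finset.sum_const, hset, Finset.card_image_of_injOn,
      Finset.card_range]
    · have := per_pos σ x
      rw [nsmul_eq_mul, mul_one_div_cancel]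
      positivity
    · intro i hi j hj h
      simp only [Finset.coe_range, Set.mem_Iio] at hi hj
      exact (iterate_eq_iterate_iff_of_lt_minimalPeriod hi hj).1 h
  rw [Finset.sum_congr rfl (fun q _ => key q)]
  simp [z, N]

variable {W : Set (List (S × Bool))}

lemma deg_one (hW : SCW W) (M : Mp S K D) (hw : ∀ d, word M.φ M.lam d ∈ W) (x : D) :
    2 ≤ minimalPeriod (M.φ * M.e) (M.φ x) := by
  by_contra hlt
  have hp := per_pos (M.φ * M.e) (M.φ x)
  have h1 : minimalPeriod (M.φ * M.e) (M.φ x) = 1 := by omega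
  have h2 := iterate_minimalPeriod (f := M.φ * M.e) (x := M.φ x)
  rw [h1, iterate_one, Perm.mul_apply] at h2
  have h3 : M.e (M.φ x) = x := M.φ.injective h2
  have h4 : M.φ x = M.e x := by rw [← M.e_inv (M.φ x), h3]
  have h5 := M.lam_e x
  rw [← h4] at h5
  exact not_cancel _ _ hW _ (hw x) h5

lemma deg_two (hW : SCW W) (M : Mp S K D) (hw : ∀ d, word M.φ M.lam d ∈ W) (x : D)
    (h : ¬ 3 ≤ minimalPeriod (M.φ * M.e) (M.φ x)) : M.e (M.φ x) = M.φ.symm (M.e x) := by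
  have h0 := deg_one hW M hw x
  have h1 : minimalPeriod (M.φ * M.e) (M.φ x) = 2 := by omega
  have h2 := iterate_minimalPeriod (f := M.φ * M.e) (x := M.φ x)
  rw [h1, iterate_succ_apply, iterate_one, Perm.mul_apply, Perm.mul_apply] at h2
  have h3 : M.e (M.φ (M.e (M.φ x))) = x := M.φ.injective h2
  rw [Equiv.eq_symm_apply, ← M.e_inv (M.φ (M.e (M.φ x))), h3]

lemma exists_big (hW : SCW W) (M : Mp S K D) (hw : ∀ d, word M.φ M.lam d ∈ W) (d : D)
    (hm : word M.φ M.lam d ≠ FreeGroup.invRev (word M.φ M.lam (M.φ (M.e d)))) :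
    ∃ j < (minimalPeriod M.φ d - 1) / 6,
      3 ≤ minimalPeriod (M.φ * M.e) (M.φ^[j+1] d) := by
  by_contra hc
  push Not at hc
  set t := (minimalPeriod M.φ d - 1) / 6 with ht
  have hn := per_pos M.φ d
  have he : ∀ j ≤ t, M.e (M.φ^[j] d) = M.φ.symm^[j] (M.e d) := by
    intro j
    induction j with
    | zero => intro _; rfl
    | succ j ih =>
      intro hj
      have := hc j (by omega)
      rw [iterate_succ_apply'] at this
      rw [iterate_succ_apply', iterate_succ_apply', deg_two hW M hw _ (by omega), ih (by omega)]
  set w := word M.φ M.lam d with hwd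
  set b := FreeGroup.invRev (word M.φ M.lam (M.φ (M.e d))) with hb
  have lw : w.length = minimalPeriod M.φ d := word_length _ _ _
  have lb0 : (word M.φ M.lam (M.φ (M.e d))).length = minimalPeriod M.φ (M.e d) := by
    rw [word_length, per_φ]
  have lb : b.length = minimalPeriod M.φ (M.e d) := by
    rw [hb, FreeGroup.invRev_length, lb0]
  have hn' := per_pos M.φ (M.e d)
  have hbW : b ∈ W := hW.inv _ (hw _)
  set k := min (t + 1) (minimalPeriod M.φ (M.e d)) with hk
  have hkw : k ≤ w.length := by omega
  have hkb : k ≤ b.length := by omega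
  have htake : w.take k = b.take k := by
    apply List.ext_getElem
    · simp only [List.length_take]; omega
    · intro i h1 h2
      have hik : i < k := by simp only [List.length_take] at h1; omega
      rw [List.getElem_take, List.getElem_take]
      rw [word_get, invRev_get _ _ _ (by omega), word_get, lb0]
      have e1 : M.φ^[minimalPeriod M.φ (M.e d) - 1 - i] (M.φ (M.e d)) = M.φ.symm^[i] (M.e d) := by
        apply (M.φ.injective.iterate i)
        rw [iter_symm, ← iterate_succ_apply, ← iterate_add_apply]
        have : i + (minimalPeriod M.φ (M.e d) - 1 - i).succ = minimalPeriod M.φ (M.e d) := by omega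
        rw [this, iterate_minimalPeriod]
      rw [e1, ← he i (by omega), M.lam_e, neg_neg]
  have hp : w.take k ≠ [] := by
    intro h
    have := congrArg List.length h
    simp only [List.length_take, List.length_nil] at this
    omega
  have e1 : w.take k ++ w.drop k = w := List.take_append_drop k w
  have e2 : w.take k ++ b.drop k = b := by rw [htake]; exact List.take_append_drop k b
  have p1 := hW.piece (w.take k) (w.drop k) (b.drop k) hp (by rw [e1]; exact hw d)
    (by rw [e2]; exact hbW) (by rw [e1, e2]; exact hm)
  have p2 := hW.piece (w.take k) (b.drop k) (w.drop k) hp (by rw [e2]; exact hbW)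
    (by rw [e1]; exact hw d) (by rw [e1, e2]; exact hm.symm)
  rw [e1] at p1
  rw [e2] at p2
  rw [List.length_take] at p1 p2
  omega

lemma curvature (hW : SCW W) (M : Mp S K D) (hw : ∀ d, word M.φ M.lam d ∈ W) [Nonempty D]
    (hm : ∀ d, word M.φ M.lam d ≠ FreeGroup.invRev (word M.φ M.lam (M.φ (M.e d)))) :
    2 < gen M.φ M.e := by
  classical
  set n : D → ℕ := fun d => minimalPeriod M.φ d with hn
  set dg : D → ℕ := fun d => minimalPeriod (M.φ * M.e) d with hdg
  set χ : D → ℚ := fun d => if 3 ≤ dg d then 1 else 0 with hχ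
  set t : D → ℕ := fun d => (n d - 1) / 6 with ht
  have hnpos : ∀ d, 0 < n d := per_pos M.φ
  have χ0 : ∀ d, 0 ≤ χ d := by intro d; simp only [hχ]; split_ifs <;> norm_num
  have hdg2 : ∀ d, 2 ≤ dg d := by
    intro d
    have := deg_one hW M hw (M.φ.symm d)
    rwa [apply_symm_apply] at this
  -- each face sees a large vertex
  have a1 : ∀ d, 1 / (n d : ℚ) ≤ ∑ j ∈ Finset.range (t d), χ (M.φ^[j+1] d) / (n d : ℚ) := by
    intro d
    obtain ⟨j, hj, hj3⟩ := exists_big hW M hw d (hm d)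
    have : χ (M.φ^[j+1] d) = 1 := by simp only [hχ, hdg]; rw [if_pos hj3]
    rw [← this]
    exact Finset.single_le_sum (f := fun j => χ (M.φ^[j+1] d) / (n d : ℚ))
      (fun i _ => div_nonneg (χ0 _) (Nat.cast_nonneg _)) (Finset.mem_range.2 hj)
  obtain ⟨B, hB⟩ : ∃ B, ∀ d, t d ≤ B :=
    ⟨∑ d, t d, fun d => Finset.single_le_sum (fun _ _ => Nat.zero_le _) (Finset.mem_univ d)⟩
  have a2 : ∀ d, ∑ j ∈ Finset.range (t d), χ (M.φ^[j+1] d) / (n d : ℚ) =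
      ∑ j ∈ Finset.range B, if j < t (M.φ^[j+1] d) then
        χ (M.φ^[j+1] d) / (n (M.φ^[j+1] d) : ℚ) else 0 := by
    intro d
    have hni : ∀ j, n (M.φ^[j] d) = n d := fun j => per_iter M.φ d j
    have hti : ∀ j, t (M.φ^[j] d) = t d := fun j => by simp only [ht, hni]
    simp only [hni, hti]
    rw [← Finset.sum_filter]
    apply Finset.sum_congr _ (fun _ _ => rfl)
    ext j
    have := hB d
    simp only [Finset.mem_range, Finset.mem_filter]
    omega
  have a3 : ∑ d, 1 / (n d : ℚ) ≤ ∑ d, χ d * (t d : ℚ) / (n d : ℚ) := by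
    calc ∑ d, 1 / (n d : ℚ) ≤ ∑ d, ∑ j ∈ Finset.range (t d), χ (M.φ^[j+1] d) / (n d : ℚ) :=
          Finset.sum_le_sum (fun d _ => a1 d)
      _ = ∑ d, ∑ j ∈ Finset.range B, (if j < t (M.φ^[j+1] d) then
        χ (M.φ^[j+1] d) / (n (M.φ^[j+1] d) : ℚ) else 0) := Finset.sum_congr rfl (fun d _ => a2 d)
      _ = ∑ j ∈ Finset.range B, ∑ d, (if j < t (M.φ^[j+1] d) then
        χ (M.φ^[j+1] d) / (n (M.φ^[j+1] d) : ℚ) else 0) := Finset.sum_comm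
      _ = ∑ j ∈ Finset.range B, ∑ d, (if j < t d then χ d / (n d : ℚ) else 0) := by
          apply Finset.sum_congr rfl
          intro j _
          have := Equiv.sum_comp (M.φ ^ (j+1)) (fun d => (if j < t d then χ d / (n d : ℚ) else 0))
          rw [← this]
          simp only [Perm.coe_pow]
      _ = ∑ d, ∑ j ∈ Finset.range B, (if j < t d then χ d / (n d : ℚ) else 0) := Finset.sum_comm
      _ = ∑ d, χ d * (t d : ℚ) / (n d : ℚ) := by
          apply Finset.sum_congr rfl
          intro d _
          rw [← Finset.sum_filter, Finset.sum_const]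
          have : Finset.filter (fun j => j < t d) (Finset.range B) = Finset.range (t d) := by
            ext j
            have := hB d
            simp only [Finset.mem_range, Finset.mem_filter]
            omega
          rw [this, Finset.card_range, nsmul_eq_mul]
          ring
  have a4 : ∀ d, χ d * (t d : ℚ) / (n d : ℚ) + (1 / (dg d : ℚ)) + χ d / (6 * n d) ≤ 1 / 2 := by
    intro d
    have hnq : (0 : ℚ) < n d := by exact_mod_cast hnpos d
    have htn : 6 * t d + 1 ≤ n d := by have := hnpos d; simp only [ht]; omega
    have htq : 6 * (t d : ℚ) + 1 ≤ n d := by exact_mod_cast htn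
    by_cases h3 : 3 ≤ dg d
    · have c1 : χ d = 1 := by simp only [hχ]; rw [if_pos h3]
      have h3q : (3 : ℚ) ≤ dg d := by exact_mod_cast h3
      have c2 : 1 / (dg d : ℚ) ≤ 1 / 3 := one_div_le_one_div_of_le (by norm_num) h3q
      have c3 : (t d : ℚ) / n d + 1 / (6 * n d) ≤ 1 / 6 := by
        rw [show (t d : ℚ) / n d + 1 / (6 * n d) = (6 * t d + 1) / (6 * n d) by field_simp,
          div_le_div_iff₀ (by positivity) (by norm_num)]
        linarith
      rw [c1, one_mul]
      linarith
    · have c1 : χ d = 0 := by simp only [hχ]; rw [if_neg h3]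
      have h2q : (2 : ℚ) ≤ dg d := by exact_mod_cast hdg2 d
      have c2 : 1 / (dg d : ℚ) ≤ 1 / 2 := one_div_le_one_div_of_le (by norm_num) h2q
      rw [c1]
      simpa using c2
  have a5 : 0 < ∑ d, χ d / (6 * n d : ℚ) := by
    obtain ⟨d⟩ := ‹Nonempty D›
    obtain ⟨j, hj, hj3⟩ := exists_big hW M hw d (hm d)
    apply Finset.sum_pos'
    · intro i _; exact div_nonneg (χ0 _) (by positivity)
    · refine ⟨M.φ^[j+1] d, Finset.mem_univ _, ?_⟩
      have c1 : χ (M.φ^[j+1] d) = 1 := by simp only [hχ, hdg]; rw [if_pos hj3]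
      have hnq : (0 : ℚ) < n (M.φ^[j+1] d) := by exact_mod_cast hnpos _
      rw [c1]; positivity
  have a6 := Finset.sum_le_sum (fun d (_ : d ∈ Finset.univ) => a4 d)
  rw [Finset.sum_add_distrib, Finset.sum_add_distrib, Finset.sum_const, nsmul_eq_mul,
    Finset.card_univ] at a6
  have zφ := z_eq_sum M.φ
  have zν := z_eq_sum (M.φ * M.e)
  have ze := z_eq_sum M.e
  have ze2 : (z M.e : ℚ) = (Fintype.card D : ℚ) * (1 / 2) := by
    rw [ze, ← Finset.card_univ, ← nsmul_eq_mul, ← Finset.sum_const]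
    apply Finset.sum_congr rfl
    intro d _
    have : minimalPeriod M.e d = 2 := by
      apply minimalPeriod_eq_prime
      · exact M.e_inv d
      · exact M.e_ne d
    rw [this]; norm_num
  have hcc : 1 ≤ cc M.φ M.e := by
    unfold cc N
    have : Nonempty (Quot (orb M.φ M.e)) := ⟨Quot.mk _ (Classical.arbitrary D)⟩
    have : 0 < Nat.card (Quot (orb M.φ M.e)) := Nat.card_pos
    exact_mod_cast this
  have hccq : (1 : ℚ) ≤ cc M.φ M.e := by exact_mod_cast hcc
  have : (2 : ℚ) < (gen M.φ M.e : ℤ) := by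
    unfold gen
    push_cast
    simp only [hn, hdg] at a3 a6 a5
    linarith
  exact_mod_cast this

variable {Nn : Subgroup (FreeGroup S)} {Ψ : K → FreeGroup S → ℤ}

/-- There are no toral diagrams of nonzero area. -/
theorem area_zero (hW : SCW W) (hA : AreaData Nn Ψ) (hN : ∀ w ∈ W, FreeGroup.mk w ∈ Nn)
    (n : ℕ) : ∀ (D : Type) [Fintype D] [DecidableEq D] (M : Mp S K D), Fintype.card D = n →
      (∀ d, word M.φ M.lam d ∈ W) → gen M.φ M.e ≤ 2 →
      ∑ d, ar Ψ M.φ M.lam M.kap d = 0 := by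
  induction n using Nat.strong_induction_on with
  | _ n ih =>
    intro D _ _ M hD hw hg
    rcases isEmpty_or_nonempty D with hE | hE
    · simp
    by_cases hm : ∃ d, word M.φ M.lam d = FreeGroup.invRev (word M.φ M.lam (M.φ (M.e d)))
    · obtain ⟨d, hd⟩ := hm
      obtain ⟨D', i1, i2, M', hc, hg', hw', ha⟩ := mirror_remove hW hA hN M hw d hd
      rw [← ha]
      exact ih (Fintype.card D') (by omega) D' M' rfl hw' (hg'.trans hg)
    · push Not at hm
      have := curvature hW M hw hm
      omega
end Curv
end SC

set_option linter.unusedSectionVars false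
set_option linter.unusedSimpArgs false
namespace SC
open Equiv Function

section Zip
variable {S : Type*} [DecidableEq S] {K : Type*} [MulAction (FreeGroup S) K]
variable {D : Type} [Fintype D] [DecidableEq D]

def Link {D : Type} (φ e : Perm D) (Z : Set D) (a b : D) : Prop :=
  Relation.ReflTransGen (fun u v => u ∈ Z ∧ v = φ (e u)) (φ a) b

lemma Link.same {φ e : Perm D} {Z : Set D} {u v : D}
    (h : Relation.ReflTransGen (fun u v => u ∈ Z ∧ v = φ (e u)) u v) :
    (φ * e).SameCycle u v := by
  induction h with
  | refl => exact Perm.SameCycle.refl _ _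
  | tail _ h2 ih =>
    rw [h2.2]
    exact ih.trans ⟨1, by simp⟩

lemma Link.mono {φ e e' : Perm D} {Z Z' : Set D} (hZ : Z ⊆ Z') (he : ∀ d ∈ Z, e' d = e d)
    {u v : D} (h : Relation.ReflTransGen (fun u v => u ∈ Z ∧ v = φ (e u)) u v) :
    Relation.ReflTransGen (fun u v => u ∈ Z' ∧ v = φ (e' u)) u v := by
  induction h with
  | refl => exact Relation.ReflTransGen.refl
  | tail _ h2 ih => exact ih.tail ⟨hZ h2.1, by rw [he _ h2.1]; exact h2.2⟩

lemma zip_aux (L : List (S × Bool)) (hL : FreeGroup.Red L []) :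
    ∀ (M : Mp S K D) (Z : Set D) (y : List D), y.map M.lam = L → y.Nodup →
      (∀ d ∈ y, d ∉ Z) → (∀ d ∈ Z, M.e d ∈ Z) → y.IsChain (Link M.φ M.e Z) →
      ∃ M' : Mp S K D, M'.φ = M.φ ∧ M'.lam = M.lam ∧ M'.kap = M.kap ∧
        gen M'.φ M'.e ≤ gen M.φ M.e ∧ ∀ d, d ∈ Z ∨ d ∈ y → M'.e d ∈ Z ∨ M'.e d ∈ y := by
  induction hL using Relation.ReflTransGen.head_induction_on with
  | refl =>
    intro M Z y hy _ _ hZ _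
    rw [List.map_eq_nil_iff] at hy
    subst hy
    refine ⟨M, rfl, rfl, rfl, le_rfl, ?_⟩
    rintro d (h | h)
    · exact Or.inl (hZ d h)
    · simp at h
  | head hstep _ ih =>
    intro M Z y hy hnd hdis hZ hch
    cases hstep with
    | @not L1 L2 s b =>
    obtain ⟨y1, y', rfl, rfl, h3⟩ := List.map_eq_append_iff.1 hy
    obtain ⟨a, y'', rfl, h4, h5⟩ := List.map_eq_cons_iff.1 h3
    obtain ⟨c, y2, rfl, h6, rfl⟩ := List.map_eq_cons_iff.1 h5
    clear h3 h5 hy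
    rw [List.isChain_append, List.isChain_cons_cons] at hch
    obtain ⟨c1, ⟨c2, c3⟩, c4⟩ := hch
    have hca : c ≠ a := by
      rintro rfl
      simp [List.nodup_append, List.nodup_cons] at hnd
    have hl : M.lam c = neg (M.lam a) := by rw [h4, h6]; rfl
    have hs : (M.φ * M.e).SameCycle (M.e a) c := by
      have h1 : (M.φ * M.e).SameCycle (M.e a) (M.φ a) := ⟨1, by simp [M.e_inv]⟩
      exact h1.trans (Link.same c2)
    obtain ⟨M1, f1, f2, f3, f4, f5, f6⟩ := flip_step M Z hZ (hdis c (by simp)) (hdis a (by simp))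
      hca hl hs
    have f5' : M1.e a = c := by rw [← f5, M1.e_inv]
    have hsub : Z ⊆ Z ∪ {a, c} := Set.subset_union_left
    have hmono : ∀ u v, Link M.φ M.e Z u v → Link M1.φ M1.e (Z ∪ {a, c}) u v := by
      intro u v h
      unfold Link at *
      rw [f1]
      exact Link.mono hsub f4 h
    obtain ⟨M2, g1, g2, g3, g4, g5⟩ := ih M1 (Z ∪ {a, c}) (y1 ++ y2) (by simp [f2])
      (by
        refine hnd.sublist ?_
        exact List.Sublist.append_left ((List.sublist_cons_self _ _).trans (List.sublist_cons_self _ _)) _)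
      (by
        intro d hd
        simp only [Set.mem_union, Set.mem_insert_iff, Set.mem_singleton_iff, not_or]
        refine ⟨hdis d ?_, ?_, ?_⟩
        · simp only [List.mem_append, List.mem_cons] at hd ⊢; tauto
        · rintro rfl
          simp only [List.nodup_append, List.nodup_cons, List.mem_append, List.mem_cons] at hnd hd
          rcases hd with hd | hd
          · exact hnd.2.2 d hd d (Or.inl rfl) rfl
          · exact hnd.2.1.1 (Or.inr hd)
        · rintro rfl
          simp only [List.nodup_append, List.nodup_cons, List.mem_append, List.mem_cons] at hnd hd
          rcases hd with hd | hd
          · exact hnd.2.2 d hd d (Or.inr (Or.inl rfl)) rfl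
          · exact hnd.2.1.2.1 hd)
      (by
        rintro d (hd | rfl | rfl)
        · left; rw [f4 d hd]; exact hZ d hd
        · right; right; exact f5'
        · right; left; exact f5)
      (by
        rw [List.isChain_append]
        refine ⟨c1.imp hmono, c3.tail.imp hmono, ?_⟩
        intro u hu v hv
        have k1 : Link M1.φ M1.e (Z ∪ {a, c}) u a := hmono _ _ (c4 u hu a (by simp))
        have k2 : Link M1.φ M1.e (Z ∪ {a, c}) c v := by
          cases y2 with
          | nil => simp at hv
          | cons v' y2 =>
            simp only [List.head?_cons, Option.mem_def, Option.some.injEq] at hv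
            subst hv
            rw [List.isChain_cons_cons] at c3
            exact hmono _ _ c3.1
        have k3 : Relation.ReflTransGen (fun u v => u ∈ Z ∪ {a, c} ∧ v = M1.φ (M1.e u)) a (M1.φ c) :=
          Relation.ReflTransGen.single ⟨by simp, by rw [f5']⟩
        exact (Relation.ReflTransGen.trans k1 k3).trans k2)
    refine ⟨M2, g1.trans f1, g2.trans f2, g3.trans f3, g4.trans f6, ?_⟩
    intro d hd
    have key : ∀ d, (d ∈ Z ∨ d ∈ y1 ++ a :: c :: y2) ↔ (d ∈ Z ∪ {a, c} ∨ d ∈ y1 ++ y2) := by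
      intro d
      simp only [Set.mem_union, Set.mem_insert_iff, Set.mem_singleton_iff, List.mem_append,
        List.mem_cons]
      tauto
    rw [key] at hd ⊢
    exact g5 d hd

noncomputable def face {D : Type} (φ : Perm D) (d : D) : List D :=
  (List.range (minimalPeriod φ d)).map (fun i => φ^[i] d)

lemma face_map (φ : Perm D) (lam : D → S × Bool) (d : D) :
    (face φ d).map lam = word φ lam d := by
  rw [face, word, List.map_map]
  rfl

lemma mem_face (φ : Perm D) (d x : D) : x ∈ face φ d ↔ φ.SameCycle d x := by
  simp only [face, List.mem_map, List.mem_range]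
  constructor
  · rintro ⟨i, _, rfl⟩
    exact ⟨i, by rw [zpow_natCast, Perm.coe_pow]⟩
  · intro h
    obtain ⟨i, hi⟩ := h.exists_nat_pow_eq
    refine ⟨i % minimalPeriod φ d, Nat.mod_lt _ (per_pos φ d), ?_⟩
    rw [iter_mod, ← hi, Perm.coe_pow]

lemma face_nodup (φ : Perm D) (d : D) : (face φ d).Nodup := by
  apply List.Nodup.map_on _ List.nodup_range
  intro i hi j hj h
  rw [List.mem_range] at hi hj
  exact (iterate_eq_iterate_iff_of_lt_minimalPeriod hi hj).1 h

lemma face_length (φ : Perm D) (d : D) : (face φ d).length = minimalPeriod φ d := by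
  simp [face]

lemma face_sum {Nn : Subgroup (FreeGroup S)} {Ψ : K → FreeGroup S → ℤ} (hA : AreaData Nn Ψ)
    [Nn.Normal] (M : Mp S K D) (d : D) (h : FreeGroup.mk (word M.φ M.lam d) ∈ Nn) :
    ∑ x ∈ (face M.φ d).toFinset, ar Ψ M.φ M.lam M.kap x =
      Ψ (M.kap d) (FreeGroup.mk (word M.φ M.lam d)) := by
  have key : ∀ i, FreeGroup.mk (word M.φ M.lam (M.φ^[i] d)) ∈ Nn ∧
      ar Ψ M.φ M.lam M.kap (M.φ^[i] d) = ar Ψ M.φ M.lam M.kap d := by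
    intro i
    induction i with
    | zero => exact ⟨h, rfl⟩
    | succ n ih =>
      rw [iterate_succ_apply', ar_φ hA M _ ih.1]
      refine ⟨?_, ih.2⟩
      rw [mk_word_φ]
      have := ‹Nn.Normal›.conj_mem _ ih.1 (lt (M.lam (M.φ^[n] d)))⁻¹
      rwa [inv_inv] at this
  have h1 : ∀ x ∈ (face M.φ d).toFinset, ar Ψ M.φ M.lam M.kap x = ar Ψ M.φ M.lam M.kap d := by
    intro x hx
    simp only [face, List.mem_toFinset, List.mem_map] at hx
    obtain ⟨i, _, rfl⟩ := hx
    exact (key i).2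
  rw [Finset.sum_congr rfl h1, Finset.sum_const, List.toFinset_card_of_nodup (face_nodup _ _),
    face_length, nsmul_eq_mul, ar]
  have := per_pos M.φ d
  field_simp

lemma zip_final {W : Set (List (S × Bool))} {Nn : Subgroup (FreeGroup S)}
    {Ψ : K → FreeGroup S → ℤ} [Nn.Normal] (hW : SCW W) (hA : AreaData Nn Ψ)
    (hN : ∀ w ∈ W, FreeGroup.mk w ∈ Nn) (M : Mp S K D) (d : D)
    (hw : ∀ x, ¬ M.φ.SameCycle d x → word M.φ M.lam x ∈ W)
    (hd : FreeGroup.mk (word M.φ M.lam d) = 1) (hg : gen M.φ M.e ≤ 2) :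
    ∑ x, ar Ψ M.φ M.lam M.kap x = 0 := by
  have hred : FreeGroup.Red (word M.φ M.lam d) [] := by
    have h1 := FreeGroup.reduce.red (L := word M.φ M.lam d)
    rw [FreeGroup.one_eq_mk] at hd
    rwa [FreeGroup.reduce.sound hd, FreeGroup.reduce_nil] at h1
  obtain ⟨M1, e1, e2, e3, g1, hX⟩ := zip_aux _ hred M ∅ (face M.φ d) (face_map _ _ _)
    (face_nodup _ _) (by simp) (by simp) (by
      rw [List.isChain_iff_getElem]
      intro i hi
      simp only [face, List.getElem_map, List.getElem_range]
      rw [iterate_succ_apply']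
      exact Relation.ReflTransGen.refl)
  simp only [Set.mem_empty_iff_false, false_or] at hX
  set X := (face M.φ d).toFinset with hXd
  have memX : ∀ x, x ∈ X ↔ M.φ.SameCycle d x := by
    intro x; rw [hXd, List.mem_toFinset, mem_face]
  have hX' : ∀ x, x ∈ X → M1.e x ∈ X := by
    intro x; rw [hXd, List.mem_toFinset, List.mem_toFinset]; exact hX x
  obtain ⟨M2, hg2, h2⟩ := restrict_map M1 X
    (by intro x; rw [e1, memX, memX, Perm.sameCycle_apply_right])
    (fun u => ⟨fun hu => by have := hX' _ hu; rwa [M1.e_inv] at this, hX' u⟩)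
  have hz := area_zero hW hA hN _ _ M2 rfl (by
    intro u
    rw [(h2 u).2.1, e1, e2]
    apply hw
    have := u.2
    rwa [memX] at this) (hg2.trans (g1.trans hg))
  have s1 : ∀ u : {d // d ∉ X}, ar Ψ M2.φ M2.lam M2.kap u = ar Ψ M.φ M.lam M.kap u.1 := by
    intro u
    obtain ⟨a, b, c⟩ := h2 u
    unfold ar
    rw [a, b, c, e1, e2, e3]
  rw [Finset.sum_congr rfl (fun u _ => s1 u)] at hz
  have a4 := Finset.sum_add_sum_compl X (ar Ψ M.φ M.lam M.kap)
  have a5 : ∑ x ∈ X, ar Ψ M.φ M.lam M.kap x = 0 := by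
    rw [hXd, face_sum hA M d (by rw [hd]; exact Nn.one_mem), hd, hA.one]; norm_num
  rw [a5, zero_add] at a4
  rw [← a4, ← hz]
  apply Finset.sum_subtype
  simp

end Zip
end SC

set_option linter.unusedSectionVars false
set_option linter.unusedSimpArgs false
namespace SC
open Equiv Function

section Join
variable {S : Type*} [DecidableEq S] {K : Type*} [MulAction (FreeGroup S) K]
variable {D : Type} [Fintype D] [DecidableEq D]

lemma same_iter (φ : Perm D) (d : D) (i : ℕ) : φ.SameCycle d (φ^[i] d) :=
  ⟨i, by rw [zpow_natCast, Perm.coe_pow]⟩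

lemma join_iter (φ : Perm D) (p q : D) (hpq : ¬ φ.SameCycle p q) :
    (∀ i < minimalPeriod φ p, (φ * swap p q)^[i] (φ p) = φ^[i] (φ p)) ∧
      (φ * swap p q)^[minimalPeriod φ p] (φ p) = φ q := by
  have h1 : ∀ i < minimalPeriod φ p, (φ * swap p q)^[i] (φ p) = φ^[i] (φ p) := by
    intro i
    induction i with
    | zero => intro _; rfl
    | succ i ih =>
      intro hi
      rw [iterate_succ_apply', ih (by omega), iterate_succ_apply', Perm.mul_apply,
        swap_apply_of_ne_of_ne]
      · intro h
        rw [← iterate_succ_apply] at h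
        exact not_isPeriodicPt_of_pos_of_lt_minimalPeriod (Nat.succ_ne_zero i) hi h
      · intro h
        apply hpq
        rw [← h, ← iterate_succ_apply]
        exact same_iter _ _ _
  refine ⟨h1, ?_⟩
  have hp := per_pos φ p
  obtain ⟨n, hn⟩ : ∃ n, minimalPeriod φ p = n + 1 := ⟨minimalPeriod φ p - 1, by omega⟩
  rw [hn, iterate_succ_apply', h1 n (by omega), ← iterate_succ_apply, Nat.succ_eq_add_one, ← hn,
    iterate_minimalPeriod, Perm.mul_apply, swap_apply_left]

lemma join_per (φ : Perm D) (p q : D) (hpq : ¬ φ.SameCycle p q) :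
    minimalPeriod (φ * swap p q) (φ p) = minimalPeriod φ p + minimalPeriod φ q := by
  obtain ⟨a1, a2⟩ := join_iter φ p q hpq
  obtain ⟨b1, b2⟩ := join_iter φ q p (fun h => hpq h.symm)
  rw [swap_comm] at b1 b2
  have hp := per_pos φ p
  have hq := per_pos φ q
  have hper : IsPeriodicPt (φ * swap p q) (minimalPeriod φ p + minimalPeriod φ q) (φ p) := by
    rw [IsPeriodicPt, IsFixedPt, add_comm, iterate_add_apply, a2, b2]
  apply le_antisymm
  · exact hper.minimalPeriod_le (by omega)
  · by_contra hlt
    push Not at hlt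
    set m := minimalPeriod (φ * swap p q) (φ p) with hm
    have hm0 : 0 < m := per_pos _ _
    have hmi : (φ * swap p q)^[m] (φ p) = φ p := iterate_minimalPeriod
    rcases Nat.lt_or_ge m (minimalPeriod φ p) with h | h
    · rw [a1 m h] at hmi
      rw [← per_φ] at h
      exact not_isPeriodicPt_of_pos_of_lt_minimalPeriod (by omega) h hmi
    · have e : m = (m - minimalPeriod φ p) + minimalPeriod φ p := by omega
      rw [e, iterate_add_apply, a2, b1 _ (by omega), ← iterate_succ_apply] at hmi
      apply hpq
      have := same_iter φ q (m - minimalPeriod φ p).succ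
      rw [hmi] at this
      exact (Perm.sameCycle_apply_right.1 this).symm

lemma join_word (φ : Perm D) (lam : D → S × Bool) (p q : D) (hpq : ¬ φ.SameCycle p q) :
    word (φ * swap p q) lam (φ p) = word φ lam (φ p) ++ word φ lam (φ q) := by
  obtain ⟨a1, a2⟩ := join_iter φ p q hpq
  obtain ⟨b1, b2⟩ := join_iter φ q p (fun h => hpq h.symm)
  rw [swap_comm] at b1 b2
  unfold word
  rw [join_per φ p q hpq, List.range_add, List.map_append, List.map_map, per_φ, per_φ]
  congr 1
  · apply List.map_congr_left
    intro i hi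
    rw [a1 i (List.mem_range.1 hi)]
  · apply List.map_congr_left
    intro i hi
    simp only [Function.comp]
    rw [add_comm, iterate_add_apply, a2, b1 i (List.mem_range.1 hi)]

lemma join_same (φ : Perm D) (p q : D) (hpq : ¬ φ.SameCycle p q) (d : D)
    (h : φ.SameCycle p d ∨ φ.SameCycle q d) : (φ * swap p q).SameCycle (φ p) d := by
  obtain ⟨a1, a2⟩ := join_iter φ p q hpq
  obtain ⟨b1, b2⟩ := join_iter φ q p (fun h => hpq h.symm)
  rw [swap_comm] at b1 b2
  rcases h with h | h
  · have h' : d ∈ face φ (φ p) := by rw [mem_face]; exact Perm.sameCycle_apply_left.2 h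
    simp only [face, List.mem_map, List.mem_range, per_φ] at h'
    obtain ⟨i, hi, rfl⟩ := h'
    rw [← a1 i hi]
    exact same_iter _ _ _
  · have h' : d ∈ face φ (φ q) := by rw [mem_face]; exact Perm.sameCycle_apply_left.2 h
    simp only [face, List.mem_map, List.mem_range, per_φ] at h'
    obtain ⟨i, hi, rfl⟩ := h'
    rw [← b1 i hi, ← a2, ← iterate_add_apply]
    exact same_iter _ _ _

lemma join_other (φ : Perm D) (lam : D → S × Bool) (p q : D) (d : D)
    (h1 : ¬ φ.SameCycle p d) (h2 : ¬ φ.SameCycle q d) :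
    minimalPeriod (φ * swap p q) d = minimalPeriod φ d ∧
      word (φ * swap p q) lam d = word φ lam d := by
  apply transport (φ₁ := φ) (φ₂ := φ * swap p q) (lam₁ := lam) (lam₂ := lam) id injective_id d
  · intro i
    simp only [id]
    rw [Perm.mul_apply, swap_apply_of_ne_of_ne]
    · intro h; apply h1; rw [← h]; exact (same_iter _ _ _).symm
    · intro h; apply h2; rw [← h]; exact (same_iter _ _ _).symm
  · intro i; rfl

def joinMap (M : Mp S K D) (p q : D) (hk : M.kap (M.φ p) = M.kap (M.φ q)) : Mp S K D where
  φ := M.φ * swap p q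
  e := M.e
  lam := M.lam
  kap := M.kap
  e_inv := M.e_inv
  e_ne := M.e_ne
  lam_e := M.lam_e
  kap_e := M.kap_e
  kap_φ := by
    intro d
    rw [Perm.mul_apply]
    by_cases h1 : d = p
    · subst h1; rw [swap_apply_left, ← hk, M.kap_φ]
    by_cases h2 : d = q
    · subst h2; rw [swap_apply_right, hk, M.kap_φ]
    rw [swap_apply_of_ne_of_ne h1 h2, M.kap_φ]

lemma join_area {Nn : Subgroup (FreeGroup S)} {Ψ : K → FreeGroup S → ℤ} (hA : AreaData Nn Ψ)
    [Nn.Normal] (M : Mp S K D) (p q : D) (hk : M.kap (M.φ p) = M.kap (M.φ q))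
    (hpq : ¬ M.φ.SameCycle p q)
    (h1 : FreeGroup.mk (word M.φ M.lam (M.φ p)) ∈ Nn)
    (h2 : FreeGroup.mk (word M.φ M.lam (M.φ q)) ∈ Nn) :
    ∑ d, ar Ψ (joinMap M p q hk).φ (joinMap M p q hk).lam (joinMap M p q hk).kap d =
      ∑ d, ar Ψ M.φ M.lam M.kap d := by
  set M' := joinMap M p q hk with hM'
  have hw : word M'.φ M'.lam (M.φ p) = word M.φ M.lam (M.φ p) ++ word M.φ M.lam (M.φ q) :=
    join_word M.φ M.lam p q hpq
  have hdisj : Disjoint (face M.φ (M.φ p)).toFinset (face M.φ (M.φ q)).toFinset := by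
    rw [Finset.disjoint_left]
    intro x hx hx'
    rw [List.mem_toFinset, mem_face, Perm.sameCycle_apply_left] at hx hx'
    exact hpq (hx.trans hx'.symm)
  have hother : ∀ x, ¬ M.φ.SameCycle p x → ¬ M.φ.SameCycle q x →
      ar Ψ M'.φ M'.lam M'.kap x = ar Ψ M.φ M.lam M.kap x := by
    intro x h1 h2
    have := join_other M.φ M.lam p q x h1 h2
    unfold ar
    show (Ψ (M.kap x) (FreeGroup.mk (word (M.φ * swap p q) M.lam x)) : ℚ) /
      (minimalPeriod (M.φ * swap p q) x : ℚ) = _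
    rw [this.1, this.2]
  have hface : (face M'.φ (M.φ p)).toFinset =
      (face M.φ (M.φ p)).toFinset ∪ (face M.φ (M.φ q)).toFinset := by
    symm
    apply Finset.eq_of_subset_of_card_le
    · intro x hx
      rw [Finset.mem_union, List.mem_toFinset, List.mem_toFinset, mem_face, mem_face,
        Perm.sameCycle_apply_left, Perm.sameCycle_apply_left] at hx
      rw [List.mem_toFinset, mem_face]
      exact join_same M.φ p q hpq x hx
    · rw [Finset.card_union_of_disjoint hdisj, List.toFinset_card_of_nodup (face_nodup _ _),
        List.toFinset_card_of_nodup (face_nodup _ _), List.toFinset_card_of_nodup (face_nodup _ _),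
        face_length, face_length, face_length, per_φ, per_φ]
      exact (join_per M.φ p q hpq).le
  set X := (face M'.φ (M.φ p)).toFinset with hX
  rw [← Finset.sum_add_sum_compl X, ← Finset.sum_add_sum_compl X (ar Ψ M.φ M.lam M.kap)]
  congr 1
  · have hin : FreeGroup.mk (word M'.φ M'.lam (M.φ p)) ∈ Nn := by
      rw [hw, mk_app]; exact Nn.mul_mem h1 h2
    rw [hX, face_sum hA M' _ hin, ← hX, hface, Finset.sum_union hdisj, face_sum hA M _ h1,
      face_sum hA M _ h2, hw, mk_app]
    show ((Ψ (M.kap (M.φ p)) _ : ℤ) : ℚ) = _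
    rw [hA.add _ _ h1 _ h2, hk]
    push_cast
    rfl
  · apply Finset.sum_congr rfl
    intro x hx
    rw [Finset.mem_compl, hface, Finset.mem_union, List.mem_toFinset, List.mem_toFinset, mem_face,
      mem_face, Perm.sameCycle_apply_left, Perm.sameCycle_apply_left] at hx
    push Not at hx
    exact hother x hx.1 hx.2

/-- Disjoint union of maps. -/
def sumMap {D₁ D₂ : Type} (M₁ : Mp S K D₁) (M₂ : Mp S K D₂) : Mp S K (D₁ ⊕ D₂) where
  φ := Equiv.sumCongr M₁.φ M₂.φ
  e := Equiv.sumCongr M₁.e M₂.e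
  lam := Sum.elim M₁.lam M₂.lam
  kap := Sum.elim M₁.kap M₂.kap
  e_inv := by rintro (d | d) <;> simp [Mp.e_inv]
  e_ne := by rintro (d | d) <;> simp [Mp.e_ne]
  lam_e := by rintro (d | d) <;> simp [Mp.lam_e]
  kap_φ := by rintro (d | d) <;> simp [Mp.kap_φ]
  kap_e := by rintro (d | d) <;> simp [Mp.kap_e]

/-- Diagrams with one special face reading `w` from a dart over `k`. -/
def St (W : Set (List (S × Bool))) (Ψ : K → FreeGroup S → ℤ) (g : ℤ) (A : ℚ)
    (w : List (S × Bool)) (k : K) : Prop :=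
  ∃ (D : Type) (_ : Fintype D) (_ : DecidableEq D) (M : Mp S K D) (d : D),
    word M.φ M.lam d = w ∧ M.kap d = k ∧
    (∀ x, ¬ M.φ.SameCycle d x → word M.φ M.lam x ∈ W) ∧ gen M.φ M.e ≤ g ∧
    ∑ x, ar Ψ M.φ M.lam M.kap x = A

variable {Nn : Subgroup (FreeGroup S)} {Ψ : K → FreeGroup S → ℤ}
variable {W : Set (List (S × Bool))}

lemma St.join [Nn.Normal] (hA : AreaData Nn Ψ) {g₁ g₂ : ℤ} {A₁ A₂ : ℚ}
    {w v : List (S × Bool)} {k : K} (h1 : St W Ψ g₁ A₁ w k) (h2 : St W Ψ g₂ A₂ v k)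
    (hw : FreeGroup.mk w ∈ Nn) (hv : FreeGroup.mk v ∈ Nn) :
    St W Ψ (g₁ + g₂) (A₁ + A₂) (w ++ v) k := by
  obtain ⟨D₁, i1, j1, M₁, d₁, w1, k1, o1, g1, a1⟩ := h1
  obtain ⟨D₂, i2, j2, M₂, d₂, w2, k2, o2, g2, a2⟩ := h2
  have t1 : ∀ d, minimalPeriod (sumMap M₁ M₂).φ (Sum.inl d) = minimalPeriod M₁.φ d ∧
      word (sumMap M₁ M₂).φ (sumMap M₁ M₂).lam (Sum.inl d) = word M₁.φ M₁.lam d := fun d =>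
    transport (φ₁ := M₁.φ) (φ₂ := (sumMap M₁ M₂).φ) (lam₁ := M₁.lam)
      (lam₂ := (sumMap M₁ M₂).lam) Sum.inl Sum.inl_injective d (fun _ => rfl) (fun _ => rfl)
  have t2 : ∀ d, minimalPeriod (sumMap M₁ M₂).φ (Sum.inr d) = minimalPeriod M₂.φ d ∧
      word (sumMap M₁ M₂).φ (sumMap M₁ M₂).lam (Sum.inr d) = word M₂.φ M₂.lam d := fun d =>
    transport (φ₁ := M₂.φ) (φ₂ := (sumMap M₁ M₂).φ) (lam₁ := M₂.lam)
      (lam₂ := (sumMap M₁ M₂).lam) Sum.inr Sum.inr_injective d (fun _ => rfl) (fun _ => rfl)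
  have hgen : gen (sumMap M₁ M₂).φ (sumMap M₁ M₂).e = gen M₁.φ M₁.e + gen M₂.φ M₂.e :=
    gen_sum (Equiv.refl _) (fun _ => rfl) (fun _ => rfl) (fun _ => rfl) (fun _ => rfl)
  have harea : ∑ x, ar Ψ (sumMap M₁ M₂).φ (sumMap M₁ M₂).lam (sumMap M₁ M₂).kap x = A₁ + A₂ := by
    rw [Fintype.sum_sum_type, ← a1, ← a2]
    congr 1
    · apply Finset.sum_congr rfl
      intro x _
      unfold ar
      rw [(t1 x).1, (t1 x).2]
      rfl
    · apply Finset.sum_congr rfl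
      intro x _
      unfold ar
      rw [(t2 x).1, (t2 x).2]
      rfl
  set M := sumMap M₁ M₂ with hM
  set p : D₁ ⊕ D₂ := Sum.inl (M₁.φ.symm d₁) with hp
  set q : D₁ ⊕ D₂ := Sum.inr (M₂.φ.symm d₂) with hq
  have hφp : M.φ p = Sum.inl d₁ := by simp [hM, hp, sumMap]
  have hφq : M.φ q = Sum.inr d₂ := by simp [hM, hq, sumMap]
  have hsl : ∀ x y, M₁.φ.SameCycle x y → M.φ.SameCycle (Sum.inl x) (Sum.inl y) := by
    intro x y h
    obtain ⟨i, rfl⟩ := h.exists_nat_pow_eq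
    refine ⟨i, ?_⟩
    rw [zpow_natCast]
    induction i with
    | zero => rfl
    | succ n ih => rw [pow_succ', pow_succ', Perm.mul_apply, ih (by exact ⟨n, by simp⟩)]; rfl
  have hsr : ∀ x y, M₂.φ.SameCycle x y → M.φ.SameCycle (Sum.inr x) (Sum.inr y) := by
    intro x y h
    obtain ⟨i, rfl⟩ := h.exists_nat_pow_eq
    refine ⟨i, ?_⟩
    rw [zpow_natCast]
    induction i with
    | zero => rfl
    | succ n ih => rw [pow_succ', pow_succ', Perm.mul_apply, ih (by exact ⟨n, by simp⟩)]; rfl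
  have horb : Quot.mk (orb M.e M.φ) p ≠ Quot.mk (orb M.e M.φ) q := by
    intro h
    have hf : ∀ a b, orb M.e M.φ a b → Sum.isLeft a = Sum.isLeft b := by
      rintro (a | a) b (rfl | rfl) <;> rfl
    have := congrArg (Quot.lift Sum.isLeft hf) h
    simp [hp, hq] at this
  have hpq : ¬ M.φ.SameCycle p q := fun h => horb (mk_orb_of_same (Or.inl h))
  have hk : M.kap (M.φ p) = M.kap (M.φ q) := by
    rw [hφp, hφq]
    show M₁.kap d₁ = M₂.kap d₂
    rw [k1, k2]
  refine ⟨D₁ ⊕ D₂, inferInstance, inferInstance, joinMap M p q hk, Sum.inl d₁, ?_, k1, ?_, ?_, ?_⟩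
  · have := join_word M.φ M.lam p q hpq
    rw [hφp, hφq, (t1 _).2, (t2 _).2, w1, w2] at this
    exact this
  · intro x hx
    have hx1 : ¬ (M.φ.SameCycle p x ∨ M.φ.SameCycle q x) := by
      intro h
      have := join_same M.φ p q hpq x h
      rw [hφp] at this
      exact hx this
    push Not at hx1
    have e1 : word (joinMap M p q hk).φ (joinMap M p q hk).lam x = word M.φ M.lam x :=
      (join_other M.φ M.lam p q x hx1.1 hx1.2).2
    rw [e1]
    rcases x with x | x
    · rw [(t1 x).2]
      apply o1
      intro h
      apply hx1.1
      rw [← Perm.sameCycle_apply_left, hφp]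
      exact hsl _ _ h
    · rw [(t2 x).2]
      apply o2
      intro h
      apply hx1.2
      rw [← Perm.sameCycle_apply_left, hφq]
      exact hsr _ _ h
  · show gen (M.φ * swap p q) M.e ≤ _
    rw [gen_comm]
    have := gen_swap_diff horb
    rw [gen_comm M.e M.φ] at this
    linarith
  · rw [join_area hA M p q hk hpq, harea]
    · rw [hφp, (t1 _).2, w1]; exact hw
    · rw [hφq, (t2 _).2, w2]; exact hv

lemma rot_word (φ : Perm D) (lam : D → S × Bool) (u : List (S × Bool)) :
    ∀ (v : List (S × Bool)) (d : D), word φ lam d = u ++ v →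
      word φ lam (φ^[u.length] d) = v ++ u := by
  induction u with
  | nil => intro v d h; simpa using h
  | cons s u ih =>
    intro v d h
    obtain ⟨t, h1, h2⟩ := word_succ φ lam d
    rw [h1] at h
    simp only [List.cons_append, List.cons.injEq] at h
    rw [h.2, h.1, List.append_assoc] at h2
    have := ih (v ++ [s]) (φ d) h2
    rw [List.length_cons, iterate_succ_apply, this]
    simp

lemma rot_kap (M : Mp S K D) (u : List (S × Bool)) :
    ∀ (v : List (S × Bool)) (d : D), word M.φ M.lam d = u ++ v →
      M.kap (M.φ^[u.length] d) = (FreeGroup.mk u)⁻¹ • M.kap d := by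
  induction u with
  | nil => intro v d h; rw [← FreeGroup.one_eq_mk]; simp
  | cons s u ih =>
    intro v d h
    obtain ⟨t, h1, h2⟩ := word_succ M.φ M.lam d
    rw [h1] at h
    simp only [List.cons_append, List.cons.injEq] at h
    rw [h.2, h.1, List.append_assoc] at h2
    have := ih (v ++ [s]) (M.φ d) h2
    rw [List.length_cons, iterate_succ_apply, this, M.kap_φ, h.1, ← List.singleton_append, mk_app,
      mul_inv_rev, mul_smul]
    rfl

lemma St.rot {g : ℤ} {A : ℚ} {u v : List (S × Bool)} {k : K} (h : St W Ψ g A (u ++ v) k) :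
    St W Ψ g A (v ++ u) ((FreeGroup.mk u)⁻¹ • k) := by
  obtain ⟨D, i1, j1, M, d, w1, k1, o1, g1, a1⟩ := h
  refine ⟨D, i1, j1, M, M.φ^[u.length] d, rot_word _ _ _ _ _ w1, ?_, ?_, g1, a1⟩
  · rw [rot_kap M u v d w1, k1]
  · intro x hx
    apply o1
    intro h
    exact hx ((same_iter _ _ _).symm.trans h)

end Join
end SC

set_option linter.unusedSectionVars false
set_option linter.unusedSimpArgs false
namespace SC
open Equiv Function

section Blocks
open scoped Fin.CommRing Fin.NatCast
variable {S : Type*} [DecidableEq S] {K : Type*} [MulAction (FreeGroup S) K]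
variable {D : Type} [Fintype D] [DecidableEq D]

lemma z_ge (σ : Perm D) {X : Type} [Fintype X] (f : D → X) (hf : Surjective f)
    (h : ∀ d, f (σ d) = f d) : (Fintype.card X : ℤ) ≤ z σ := by
  have hs : Surjective (Quot.lift f (fun a b (hab : cyc σ a b) => by
      have : σ a = b := hab
      rw [← this, h])) := by
    intro x
    obtain ⟨d, rfl⟩ := hf x
    exact ⟨Quot.mk _ d, rfl⟩
  have := Nat.card_le_card_of_surjective _ hs
  unfold z N
  rw [Nat.card_eq_fintype_card] at this
  exact_mod_cast this

lemma cc_le_one (σ τ : Perm D) (d : D) (h : ∀ x, Quot.mk (orb σ τ) d = Quot.mk (orb σ τ) x) :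
    cc σ τ ≤ 1 := by
  unfold cc N
  have : Subsingleton (Quot (orb σ τ)) := by
    constructor
    intro a b
    induction a using Quot.ind
    induction b using Quot.ind
    rename_i a b
    exact (h a).symm.trans (h b)
  have := Finite.card_le_one_iff_subsingleton.mpr this
  exact_mod_cast this

lemma per_eq (φ : Perm D) (d : D) (n : ℕ) (hn : 0 < n) (h0 : φ^[n] d = d)
    (h1 : ∀ i, 0 < i → i < n → φ^[i] d ≠ d) : minimalPeriod φ d = n := by
  apply le_antisymm
  · exact IsPeriodicPt.minimalPeriod_le hn h0
  · by_contra hlt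
    push Not at hlt
    exact h1 _ (IsPeriodicPt.minimalPeriod_pos hn h0) hlt (iterate_minimalPeriod)

def dsφ (m : ℕ) : Perm (Fin (m+1) ⊕ Fin (m+1)) :=
  Equiv.sumCongr (Equiv.addRight 1) (Equiv.addRight 1).symm

lemma dsφ_l (m : ℕ) (i : Fin (m+1)) : dsφ m (Sum.inl i) = Sum.inl (i+1) := rfl
lemma dsφ_r (m : ℕ) (i : Fin (m+1)) : dsφ m (Sum.inr (i+1)) = Sum.inr i := by
  simp [dsφ]
lemma dsφ_r' (m : ℕ) (i : Fin (m+1)) : (dsφ m).symm (Sum.inr i) = Sum.inr (i+1) := by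
  rw [Equiv.symm_apply_eq, dsφ_r]
lemma dsφ_li (m n : ℕ) : (dsφ m)^[n] (Sum.inl 0) = Sum.inl (n : Fin (m+1)) := by
  induction n with
  | zero => simp
  | succ n ih => rw [iterate_succ_apply', ih, dsφ_l]; push_cast; rfl
lemma dsφ_ri (m n : ℕ) : (dsφ m).symm^[n] (Sum.inr 0) = Sum.inr (n : Fin (m+1)) := by
  induction n with
  | zero => simp
  | succ n ih => rw [iterate_succ_apply', ih, dsφ_r']; push_cast; rfl

lemma castne (m i : ℕ) (h0 : 0 < i) (h : i < m+1) : (i : Fin (m+1)) ≠ 0 := by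
  intro hh
  have := (Fin.natCast_eq_zero).mp hh
  exact absurd (Nat.le_of_dvd h0 this) (by omega)

lemma castself (m : ℕ) : ((m+1 : ℕ) : Fin (m+1)) = 0 := Fin.natCast_eq_zero.mpr dvd_rfl

lemma double_sphere (L : List (S × Bool)) (m : ℕ) (hm : L.length = m + 1) (k : K)
    (hk : FreeGroup.mk L • k = k) :
    ∃ (D : Type) (_ : Fintype D) (_ : DecidableEq D) (M : Mp S K D) (d : D),
      word M.φ M.lam d = L ∧ M.kap d = k ∧
      word M.φ M.lam (M.φ (M.e d)) = FreeGroup.invRev L ∧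
      (∀ x, M.φ.SameCycle d x ∨ M.φ.SameCycle (M.φ (M.e d)) x) ∧
      ¬ M.φ.SameCycle d (M.φ (M.e d)) ∧ gen M.φ M.e ≤ 0 := by
  let lamL : Fin (m+1) → S × Bool := fun i => L[i.1]'(by omega)
  let kapL : Fin (m+1) → K := fun i => (FreeGroup.mk (L.take i.1))⁻¹ • k
  have H : ∀ i, kapL (i+1) = (lt (lamL i))⁻¹ • kapL i := by
    intro i
    have h1 : (lt (lamL i))⁻¹ • kapL i = (FreeGroup.mk (L.take (i.1+1)))⁻¹ • k := by
      show (lt (lamL i))⁻¹ • (FreeGroup.mk (L.take i.1))⁻¹ • k = _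
      rw [List.take_succ_eq_append_getElem (by omega : i.1 < L.length), mk_app, mul_inv_rev, mul_smul]
      rfl
    rw [h1]
    show (FreeGroup.mk (L.take (i+1 : Fin (m+1)).1))⁻¹ • k = _
    by_cases hi : i = Fin.last m
    · subst hi
      rw [Fin.last_add_one]
      simp only [Fin.val_zero, List.take_zero, Fin.val_last, ← FreeGroup.one_eq_mk, inv_one, one_smul]
      rw [List.take_of_length_le (by omega), eq_inv_smul_iff]
      exact hk
    · rw [Fin.val_add_one_of_lt (Fin.lt_last_iff_ne_last.mpr hi)]
  let M : Mp S K (Fin (m+1) ⊕ Fin (m+1)) :=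
    { φ := dsφ m
      e := Equiv.sumComm _ _
      lam := Sum.elim lamL (fun i => neg (lamL i))
      kap := Sum.elim kapL (fun i => kapL (i+1))
      e_inv := by rintro (i | i) <;> rfl
      e_ne := by rintro (i | i) <;> simp
      lam_e := by rintro (i | i) <;> simp [neg_neg]
      kap_φ := by
        rintro (i | i)
        · rw [dsφ_l]; exact H i
        · obtain ⟨j, rfl⟩ : ∃ j, i = j + 1 := ⟨i - 1, by simp⟩
          rw [dsφ_r]
          show kapL (j+1) = (lt (neg (lamL (j+1))))⁻¹ • kapL (j+1+1)
          rw [H (j+1), lt_neg, inv_inv, smul_inv_smul]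
      kap_e := by
        rintro (i | i)
        · exact H i
        · show kapL i = (lt (neg (lamL i)))⁻¹ • kapL (i+1)
          rw [H i, lt_neg, inv_inv, smul_inv_smul] }
  have hMφ : M.φ = dsφ m := rfl
  have p1 : minimalPeriod M.φ (Sum.inl 0) = m+1 := by
    apply per_eq _ _ _ (Nat.succ_pos m)
    · rw [hMφ, dsφ_li, castself]
    · intro i h0 h hh
      rw [hMφ, dsφ_li] at hh
      exact castne m i h0 h (Sum.inl_injective hh)
  have p2 : minimalPeriod M.φ (Sum.inr 0) = m+1 := by
    rw [← per_symm]
    apply per_eq _ _ _ (Nat.succ_pos m)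
    · rw [hMφ, dsφ_ri, castself]
    · intro i h0 h hh
      rw [hMφ, dsφ_ri] at hh
      exact castne m i h0 h (Sum.inr_injective hh)
  have w1 : word M.φ M.lam (Sum.inl 0) = L := by
    unfold word
    rw [p1]
    apply List.ext_getElem
    · simp [hm]
    · intro i h h'
      simp only [List.getElem_map, List.getElem_range]
      rw [hMφ, dsφ_li]
      show L[((i : Fin (m+1))).1]'_ = _
      congr 1
      rw [Fin.val_natCast]
      exact Nat.mod_eq_of_lt (by omega)
  have cov : ∀ x, M.φ.SameCycle (Sum.inl 0) x ∨ M.φ.SameCycle (M.φ (M.e (Sum.inl 0))) x := by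
    rintro (i | i)
    · left
      have := same_iter M.φ (Sum.inl 0) i.1
      rw [hMφ, dsφ_li] at this
      simpa using this
    · right
      rw [Perm.sameCycle_apply_left]
      have := same_iter M.φ.symm (Sum.inr 0) i.1
      rw [hMφ, dsφ_ri] at this
      rw [Fin.cast_val_eq_self] at this
      exact Perm.sameCycle_inv.mp this
  refine ⟨_, inferInstance, inferInstance, M, Sum.inl 0, w1, ?_, ?_, cov, ?_, ?_⟩
  · show (FreeGroup.mk (L.take (0 : Fin (m+1)).1))⁻¹ • k = k
    simp [← FreeGroup.one_eq_mk]
  · rw [← w1]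
    apply word_mirror
    · rw [p1]; exact p2.symm
    · intro i
      show M.lam ((dsφ m).symm^[i] (Sum.inr 0)) = neg (M.lam ((dsφ m)^[i] (Sum.inl 0)))
      rw [dsφ_ri, dsφ_li]
      rfl
  · intro h
    have hl : ∀ x : Fin (m+1) ⊕ Fin (m+1), (dsφ m x).isLeft = x.isLeft := by
      rintro (x | x) <;> rfl
    obtain ⟨n, hn⟩ := h.exists_nat_pow_eq
    have : ∀ n : ℕ, ((M.φ ^ n) (Sum.inl 0)).isLeft = true := by
      intro n
      induction n with
      | zero => rfl
      | succ n ih => rw [pow_succ', Perm.mul_apply, hMφ, hl]; exact ih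
    have h2 := this n
    rw [hn, hMφ, hl] at h2
    simp [M] at h2
  · have hz1 := z_ge M.φ Sum.isLeft (by rintro (_ | _); exacts [⟨Sum.inr 0, rfl⟩, ⟨Sum.inl 0, rfl⟩])
      (by rintro (x | x) <;> rfl)
    have hz2 := z_ge M.e (Sum.elim id id) (fun i => ⟨Sum.inl i, rfl⟩) (by rintro (x | x) <;> rfl)
    have hz3 := z_ge (M.φ * M.e) (Sum.elim id (fun i => i + 1)) (fun i => ⟨Sum.inl i, rfl⟩) (by
      rintro (x | x)
      · rw [Perm.mul_apply]
        obtain ⟨j, rfl⟩ : ∃ j, x = j + 1 := ⟨x - 1, by simp⟩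
        show Sum.elim id (fun i => i + 1) (dsφ m (Sum.inr (j+1))) = _
        rw [dsφ_r]; rfl
      · rfl)
    have hcc : cc M.φ M.e ≤ 1 := by
      apply cc_le_one _ _ (Sum.inl 0)
      have ho : ∀ a b, M.φ.SameCycle a b → Quot.mk (orb M.φ M.e) a = Quot.mk (orb M.φ M.e) b := by
        intro a b h
        exact mk_of_same (σ := M.φ) (fun a => Quot.sound (show orb M.φ M.e _ _ from Or.inl rfl)) h
      intro x
      rcases cov x with h | h
      · exact ho _ _ h
      · rw [← ho _ _ h]
        exact (Quot.sound (show orb M.φ M.e _ (M.e (Sum.inl 0)) from Or.inr rfl)).trans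
          (Quot.sound (show orb M.φ M.e _ _ from Or.inl rfl))
    unfold gen
    simp only [Fintype.card_sum, Fintype.card_fin, Fintype.card_bool] at hz1 hz2 hz3 ⊢
    push_cast at *
    linarith

variable {Nn : Subgroup (FreeGroup S)} {Ψ : K → FreeGroup S → ℤ}
variable {W : Set (List (S × Bool))}

lemma mk_invRev (L : List (S × Bool)) : FreeGroup.mk (FreeGroup.invRev L) = (FreeGroup.mk L)⁻¹ :=
  FreeGroup.inv_mk.symm

/-- area of a map with a single face -/
lemma one_face [Nn.Normal] (hA : AreaData Nn Ψ) (M : Mp S K D) (d : D)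
    (h : FreeGroup.mk (word M.φ M.lam d) ∈ Nn) (hc : ∀ x, M.φ.SameCycle d x) :
    ∑ x, ar Ψ M.φ M.lam M.kap x = Ψ (M.kap d) (FreeGroup.mk (word M.φ M.lam d)) := by
  rw [← face_sum hA M d h]
  congr 1
  ext x
  simp [mem_face, hc x]

/-- area of a map with two faces -/
lemma two_face [Nn.Normal] (hA : AreaData Nn Ψ) (M : Mp S K D) (d d' : D)
    (h : FreeGroup.mk (word M.φ M.lam d) ∈ Nn) (h' : FreeGroup.mk (word M.φ M.lam d') ∈ Nn)
    (hc : ∀ x, M.φ.SameCycle d x ∨ M.φ.SameCycle d' x) (hn : ¬ M.φ.SameCycle d d') :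
    ∑ x, ar Ψ M.φ M.lam M.kap x = Ψ (M.kap d) (FreeGroup.mk (word M.φ M.lam d)) +
      Ψ (M.kap d') (FreeGroup.mk (word M.φ M.lam d')) := by
  rw [← face_sum hA M d h, ← face_sum hA M d' h', ← Finset.sum_union]
  · congr 1
    ext x
    simp [mem_face, hc x]
  · rw [Finset.disjoint_left]
    intro x hx hx'
    simp only [List.mem_toFinset, mem_face] at hx hx'
    exact hn (hx.trans hx'.symm)

lemma St.spur [Nn.Normal] (hA : AreaData Nn Ψ) (s : S × Bool) (k : K) :
    St W Ψ 0 0 [s, neg s] k := by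
  let M : Mp S K Bool :=
    { φ := Equiv.boolNot
      e := Equiv.boolNot
      lam := fun b => if b then s else neg s
      kap := fun b => if b then k else (lt s)⁻¹ • k
      e_inv := by decide
      e_ne := by decide
      lam_e := by rintro (_ | _) <;> simp [neg_neg]
      kap_φ := by rintro (_ | _) <;> simp [lt_neg]
      kap_e := by rintro (_ | _) <;> simp [lt_neg] }
  have hp : minimalPeriod M.φ true = 2 := by
    apply per_eq _ _ _ (by norm_num)
    · rfl
    · intro i h0 h
      obtain rfl : i = 1 := by omega
      show (false : Bool) ≠ true
      decide
  have hw : word M.φ M.lam true = [s, neg s] := by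
    unfold word
    rw [hp]
    rfl
  have hc : ∀ x, M.φ.SameCycle true x := by
    rintro (_ | _)
    · exact same_iter M.φ true 1
    · exact same_iter M.φ true 0
  have h1 : FreeGroup.mk (word M.φ M.lam true) = 1 := by
    rw [hw, show [s, neg s] = [s] ++ [neg s] from rfl, mk_app]
    show lt s * lt (neg s) = 1
    rw [lt_neg, mul_inv_cancel]
  refine ⟨Bool, inferInstance, inferInstance, M, true, hw, rfl, fun x hx => absurd (hc x) hx, ?_, ?_⟩
  · have hz1 := z_ge M.φ (fun _ => ()) (fun _ => ⟨true, rfl⟩) (fun _ => rfl)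
    have hz2 := z_ge M.e (fun _ => ()) (fun _ => ⟨true, rfl⟩) (fun _ => rfl)
    have hz3 := z_ge (M.φ * M.e) id (fun b => ⟨b, rfl⟩) (by
      rintro (_ | _) <;> rfl)
    have hcc : cc M.φ M.e ≤ 1 := by
      apply cc_le_one _ _ true
      intro x
      exact mk_of_same (σ := M.φ) (fun a => Quot.sound (show orb M.φ M.e _ _ from Or.inl rfl)) (hc x)
    unfold gen
    simp only [Fintype.card_bool, Fintype.card_unit] at hz1 hz2 hz3 ⊢
    push_cast at *
    linarith
  · rw [one_face hA M true (by rw [h1]; exact Nn.one_mem) hc, h1, hA.one]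
    simp

lemma St.relator [Nn.Normal] (hW : SCW W) (hA : AreaData Nn Ψ)
    (hN : ∀ w ∈ W, FreeGroup.mk w ∈ Nn) (hK : ∀ n ∈ Nn, ∀ k : K, n • k = k)
    (r : List (S × Bool)) (hr : r ∈ W) (k : K) : St W Ψ 0 0 r k := by
  obtain ⟨m, hm⟩ : ∃ m, r.length = m + 1 :=
    Nat.exists_eq_succ_of_ne_zero (fun h => hW.ne r hr (List.length_eq_zero_iff.mp h))
  obtain ⟨D, i1, j1, M, d, w1, k1, w2, hc, hn, hg⟩ := double_sphere r m hm k (hK _ (hN r hr) k)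
  refine ⟨D, i1, j1, M, d, w1, k1, ?_, hg, ?_⟩
  · intro x hx0
    have hx := (hc x).resolve_left hx0
    clear hx0
    obtain ⟨i, rfl⟩ := hx.exists_nat_pow_eq
    clear hx
    have h0 : word M.φ M.lam (M.φ (M.e d)) ∈ W := by rw [w2]; exact hW.inv _ hr
    induction i with
    | zero => exact h0
    | succ n ih => rw [pow_succ', Perm.mul_apply]; exact word_mem_φ M.φ M.lam hW _ ih
  · rw [two_face hA M d (M.φ (M.e d)) (by rw [w1]; exact hN r hr)
      (by rw [w2, mk_invRev]; exact Nn.inv_mem (hN r hr)) hc hn, w1, w2, mk_invRev]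
    have : M.kap (M.φ (M.e d)) = M.kap d := M.kap_ν d
    rw [this, hA.inv _ _ (hN r hr)]
    push_cast
    ring

lemma St.torus [Nn.Normal] (hA : AreaData Nn Ψ) (A B : List (S × Bool)) (hA0 : A ≠ []) (k : K)
    (ha : FreeGroup.mk A • k = k) (hb : FreeGroup.mk B • k = k)
    (hc : FreeGroup.mk (A ++ B ++ (FreeGroup.invRev A ++ FreeGroup.invRev B)) ∈ Nn) :
    St W Ψ 2 (Ψ k (FreeGroup.mk (A ++ B ++ (FreeGroup.invRev A ++ FreeGroup.invRev B))))
      (A ++ B ++ (FreeGroup.invRev A ++ FreeGroup.invRev B)) k := by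
  obtain ⟨m, hm⟩ : ∃ m, (A ++ B).length = m + 1 :=
    Nat.exists_eq_succ_of_ne_zero (fun h => by
      rw [List.length_eq_zero_iff, List.append_eq_nil_iff] at h; exact hA0 h.1)
  obtain ⟨D, i1, j1, M, d, w1, k1, w2, hcov, hn, hg⟩ :=
    double_sphere (A ++ B) m hm k (by rw [mk_app, mul_smul, hb, ha])
  have hk1 : M.kap (M.φ (M.e d)) = k := (M.kap_ν d).trans k1
  have hrev : FreeGroup.invRev (A ++ B) = FreeGroup.invRev B ++ FreeGroup.invRev A := by
    simp [FreeGroup.invRev]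
  rw [hrev] at w2
  have w3 := rot_word _ _ _ _ _ w2
  have k3 := rot_kap M _ _ _ w2
  set d2 := M.φ^[(FreeGroup.invRev B).length] (M.φ (M.e d)) with hd2
  have hs : M.φ.SameCycle (M.φ (M.e d)) d2 := same_iter _ _ _
  rw [hk1, mk_invRev, inv_inv, hb] at k3
  set p := M.φ.symm d with hp
  set q := M.φ.symm d2 with hq
  have hφp : M.φ p = d := by simp [hp]
  have hφq : M.φ q = d2 := by simp [hq]
  have hpq : ¬ M.φ.SameCycle p q := by
    intro h
    rw [← Perm.sameCycle_apply_left, ← Perm.sameCycle_apply_right, hφp, hφq] at h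
    exact hn (h.trans hs.symm)
  have hk : M.kap (M.φ p) = M.kap (M.φ q) := by rw [hφp, hφq, k3, k1]
  have hw : word (joinMap M p q hk).φ (joinMap M p q hk).lam d =
      A ++ B ++ (FreeGroup.invRev A ++ FreeGroup.invRev B) := by
    have := join_word M.φ M.lam p q hpq
    rw [hφp, hφq, w1, w3] at this
    exact this
  have hall : ∀ x, (joinMap M p q hk).φ.SameCycle d x := by
    intro x
    have := join_same M.φ p q hpq x (by
      rcases hcov x with h | h
      · left; rwa [← Perm.sameCycle_apply_left, hφp]
      · right; rw [← Perm.sameCycle_apply_left, hφq]; exact hs.symm.trans h)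
    rw [hφp] at this
    exact this
  refine ⟨D, i1, j1, joinMap M p q hk, d, hw, k1, fun x hx => absurd (hall x) hx, ?_, ?_⟩
  · show gen (M.φ * swap p q) M.e ≤ 2
    rw [gen_comm]
    have hne : p ≠ q := fun h => hpq (h ▸ Perm.SameCycle.refl _ _)
    have := gen_swap_le_two (φ := M.e) (α := M.φ) hne
    rw [gen_comm M.e M.φ] at this
    linarith
  · rw [one_face hA _ d (by rw [hw]; exact hc) hall, hw]
    have : (joinMap M p q hk).kap d = k := k1
    rw [this]
end Blocks
end SC

set_option linter.unusedSectionVars false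
set_option linter.unusedSimpArgs false
namespace SC
open Equiv Function

section Moves
variable {S : Type*} [DecidableEq S] {K : Type*} [MulAction (FreeGroup S) K]
variable {Nn : Subgroup (FreeGroup S)} {Ψ : K → FreeGroup S → ℤ}
variable {W : Set (List (S × Bool))}

lemma St.insert [Nn.Normal] (hA : AreaData Nn Ψ) (hK : ∀ n ∈ Nn, ∀ k : K, n • k = k)
    {g : ℤ} {A : ℚ} {x y t : List (S × Bool)} {k : K} (h : St W Ψ g A (x ++ y) k)
    (hxy : FreeGroup.mk (x ++ y) ∈ Nn) (ht : ∀ k', St W Ψ 0 0 t k') (htN : FreeGroup.mk t ∈ Nn) :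
    St W Ψ g A (x ++ t ++ y) k := by
  have hyx : FreeGroup.mk (y ++ x) ∈ Nn := by
    have := Subgroup.Normal.conj_mem ‹Nn.Normal› _ hxy (FreeGroup.mk y)
    rw [mk_app] at this ⊢
    rwa [← mul_assoc, mul_inv_cancel_right] at this
  have h1 := St.join hA h.rot (ht _) hyx htN
  rw [add_zero, add_zero, List.append_assoc] at h1
  have h2 := h1.rot
  rw [smul_smul, ← mul_inv_rev, ← mk_app, hK _ (Nn.inv_mem hxy)] at h2
  exact h2

lemma St.pad [Nn.Normal] (hA : AreaData Nn Ψ) (hK : ∀ n ∈ Nn, ∀ k : K, n • k = k)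
    {g : ℤ} {A : ℚ} {w : List (S × Bool)} {k : K} (h : St W Ψ g A w k)
    (hw : FreeGroup.mk w ∈ Nn) (u : List (S × Bool)) :
    St W Ψ g A ((w ++ u) ++ FreeGroup.invRev u) k := by
  induction u using List.reverseRecOn with
  | nil => simpa using h
  | append_singleton u s ih =>
    have h1 : FreeGroup.mk ((w ++ u) ++ FreeGroup.invRev u) ∈ Nn := by
      rw [mk_app, mk_app, mk_invRev, mul_inv_cancel_right]
      exact hw
    have h2 := St.insert hA hK ih h1 (fun k' => St.spur hA s k') (by
      rw [show [s, neg s] = [s] ++ [neg s] from rfl, mk_app]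
      have : lt s * lt (neg s) = 1 := by rw [lt_neg, mul_inv_cancel]
      rw [show FreeGroup.mk [s] * FreeGroup.mk [neg s] = 1 from this]
      exact Nn.one_mem)
    convert h2 using 1
    simp [FreeGroup.invRev, neg]

lemma St.conj [Nn.Normal] (hW : SCW W) (hA : AreaData Nn Ψ)
    (hN : ∀ w ∈ W, FreeGroup.mk w ∈ Nn) (hK : ∀ n ∈ Nn, ∀ k : K, n • k = k)
    {g : ℤ} {A : ℚ} {w : List (S × Bool)} {k : K} (h : St W Ψ g A w k)
    (hw : FreeGroup.mk w ∈ Nn) (u r : List (S × Bool)) (hr : r ∈ W) :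
    St W Ψ g A (w ++ (u ++ r ++ FreeGroup.invRev u)) k := by
  have h1 : FreeGroup.mk ((w ++ u) ++ FreeGroup.invRev u) ∈ Nn := by
    rw [mk_app, mk_app, mk_invRev, mul_inv_cancel_right]
    exact hw
  have h2 := St.insert hA hK (St.pad hA hK h hw u) h1
    (fun k' => St.relator hW hA hN hK r hr k') (hN r hr)
  simpa [List.append_assoc] using h2

/-- every element of the normal closure can be appended -/
lemma St.closure [Nn.Normal] (hW : SCW W) (hA : AreaData Nn Ψ)
    (hN : ∀ w ∈ W, FreeGroup.mk w ∈ Nn) (hK : ∀ n ∈ Nn, ∀ k : K, n • k = k)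
    {R : Set (FreeGroup S)} (hR : ∀ r ∈ R, ∃ w ∈ W, FreeGroup.mk w = r)
    (hRi : ∀ r ∈ R, r⁻¹ ∈ R)
    {g : ℤ} {A : ℚ} {k : K} (x : FreeGroup S) (hx : x ∈ Subgroup.normalClosure R) :
    ∃ v, FreeGroup.mk v = x ∧ ∀ w : List (S × Bool), St W Ψ g A w k → FreeGroup.mk w ∈ Nn →
      St W Ψ g A (w ++ v) k ∧ FreeGroup.mk (w ++ v) ∈ Nn := by
  have base : ∀ x ∈ Group.conjugatesOfSet R, ∃ v, FreeGroup.mk v = x ∧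
      ∀ w : List (S × Bool), St W Ψ g A w k → FreeGroup.mk w ∈ Nn →
      St W Ψ g A (w ++ v) k ∧ FreeGroup.mk (w ++ v) ∈ Nn := by
    intro x hx
    obtain ⟨r, hr, hc⟩ := Group.mem_conjugatesOfSet_iff.mp hx
    obtain ⟨c, hc⟩ := isConj_iff.mp hc
    obtain ⟨t, ht, rfl⟩ := hR r hr
    obtain ⟨u, rfl⟩ := Quot.exists_rep c
    have hcm : FreeGroup.mk (u ++ t ++ FreeGroup.invRev u) = x := by
      rw [mk_app, mk_app, mk_invRev]; exact hc
    refine ⟨u ++ t ++ FreeGroup.invRev u, hcm, fun w h hw => ⟨St.conj hW hA hN hK h hw u t ht, ?_⟩⟩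
    rw [mk_app, mk_app, mk_app, mk_invRev]
    exact Nn.mul_mem hw (Subgroup.Normal.conj_mem ‹_› _ (hN t ht) _)
  have hinv : ∀ x ∈ Group.conjugatesOfSet R, x⁻¹ ∈ Group.conjugatesOfSet R := by
    intro x hx
    obtain ⟨r, hr, hc⟩ := Group.mem_conjugatesOfSet_iff.mp hx
    obtain ⟨c, hc⟩ := isConj_iff.mp hc
    refine Group.mem_conjugatesOfSet_iff.mpr ⟨r⁻¹, hRi r hr, isConj_iff.mpr ⟨c, ?_⟩⟩
    rw [← hc]; group
  unfold Subgroup.normalClosure at hx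
  induction hx using Subgroup.closure_induction'' with
  | one => exact ⟨[], FreeGroup.one_eq_mk.symm, fun w h hw => by simpa using ⟨h, hw⟩⟩
  | mem x hx => exact base x hx
  | inv_mem x hx => exact base _ (hinv x hx)
  | mul x y _ _ hx hy =>
    obtain ⟨v, hv, hv2⟩ := hx
    obtain ⟨v', hv', hv2'⟩ := hy
    refine ⟨v ++ v', by rw [mk_app, hv, hv'], fun w h hw => ?_⟩
    obtain ⟨a, b⟩ := hv2 w h hw
    rw [← List.append_assoc]
    exact hv2' _ a b

lemma no_torus [Nn.Normal] (hW : SCW W) (hA : AreaData Nn Ψ)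
    (hN : ∀ w ∈ W, FreeGroup.mk w ∈ Nn) (hK : ∀ n ∈ Nn, ∀ k : K, n • k = k)
    {R : Set (FreeGroup S)} (hR : ∀ r ∈ R, ∃ w ∈ W, FreeGroup.mk w = r)
    (hRi : ∀ r ∈ R, r⁻¹ ∈ R) (hNR : Nn = Subgroup.normalClosure R)
    (a b : FreeGroup S) (k : K) (ha : a • k = k) (hb : b • k = k)
    (hab : a * b * (a⁻¹ * b⁻¹) ∈ Nn) : Ψ k (a * b * (a⁻¹ * b⁻¹)) = 0 := by
  by_cases ha1 : a = 1
  · subst ha1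
    simp only [one_mul, inv_one, mul_inv_cancel]
    exact hA.one k
  have hwA : FreeGroup.mk a.toWord = a := FreeGroup.mk_toWord
  have hwB : FreeGroup.mk b.toWord = b := FreeGroup.mk_toWord
  have hm : FreeGroup.mk (a.toWord ++ b.toWord ++
      (FreeGroup.invRev a.toWord ++ FreeGroup.invRev b.toWord)) = a * b * (a⁻¹ * b⁻¹) := by
    rw [mk_app, mk_app, mk_app, mk_invRev, mk_invRev, hwA, hwB]
  have h0 := St.torus (W := W) hA a.toWord b.toWord
    (fun h => ha1 (FreeGroup.toWord_eq_nil_iff.mp h)) k (by rwa [hwA]) (by rwa [hwB])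
    (by rw [hm]; exact hab)
  obtain ⟨v, hv, hv2⟩ := St.closure (g := 2) (Ψ := Ψ)
    (A := (Ψ k (FreeGroup.mk (a.toWord ++ b.toWord ++
      (FreeGroup.invRev a.toWord ++ FreeGroup.invRev b.toWord))) : ℚ)) (k := k)
    hW hA hN hK hR hRi (a * b * (a⁻¹ * b⁻¹))⁻¹ (by rw [← hNR]; exact Nn.inv_mem hab)
  obtain ⟨h1, -⟩ := hv2 _ h0 (by rw [hm]; exact hab)
  obtain ⟨D, i1, j1, M, d, w1, k1, o1, g1, a1⟩ := h1
  have := zip_final hW hA hN M d o1 (by rw [w1, mk_app, hm, hv, mul_inv_cancel]) g1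
  rw [a1, hm] at this
  exact_mod_cast this

end Moves
end SC

set_option linter.unusedSectionVars false
set_option linter.unusedSimpArgs false
namespace SC
open Equiv Function

section Algebra

@[ext] structure Heis where
  x : ℤ
  y : ℤ
  z : ℤ

instance : Mul Heis := ⟨fun a b => ⟨a.x + b.x, a.y + b.y, a.z + b.z + a.x * b.y⟩⟩
instance : One Heis := ⟨⟨0, 0, 0⟩⟩
instance : Inv Heis := ⟨fun a => ⟨-a.x, -a.y, -a.z + a.x * a.y⟩⟩

lemma Heis.mul_def (a b : Heis) : a * b = ⟨a.x + b.x, a.y + b.y, a.z + b.z + a.x * b.y⟩ := rfl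
lemma Heis.one_def : (1 : Heis) = ⟨0, 0, 0⟩ := rfl
lemma Heis.inv_def (a : Heis) : a⁻¹ = ⟨-a.x, -a.y, -a.z + a.x * a.y⟩ := rfl

instance : Group Heis := Group.ofLeftAxioms
  (by intro a b c; simp only [Heis.mul_def]; ext <;> simp <;> ring)
  (by intro a; simp only [Heis.mul_def, Heis.one_def]; ext <;> simp)
  (by intro a; simp only [Heis.mul_def, Heis.one_def, Heis.inv_def]; ext <;> simp)

def Heis.pr : Heis →* Multiplicative ℤ × Multiplicative ℤ where
  toFun a := (Multiplicative.ofAdd a.x, Multiplicative.ofAdd a.y)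
  map_one' := rfl
  map_mul' _ _ := rfl

lemma Heis.lift_exists (A : Type*) [Group A] [IsFreeGroup A]
    (τ : A →* Multiplicative ℤ × Multiplicative ℤ) :
    ∃ θ : A →* Heis, Heis.pr.comp θ = τ := by
  refine ⟨IsFreeGroup.lift (fun g => ⟨(τ (IsFreeGroup.of g)).1.toAdd,
    (τ (IsFreeGroup.of g)).2.toAdd, 0⟩), ?_⟩
  apply IsFreeGroup.ext_hom
  intro g
  rw [MonoidHom.comp_apply, IsFreeGroup.lift_of]
  rfl

variable {G : Type*} [Group G]

open Classical in
noncomputable def zz (A : Subgroup G) (θ : A →* Heis) (g : G) : ℤ :=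
  if h : g ∈ A then (θ ⟨g, h⟩).z else 0

lemma zz_add (A N : Subgroup G) (θ : A →* Heis) (hNA : N ≤ A)
    (hθ : ∀ n (h : n ∈ N), (θ ⟨n, hNA h⟩).x = 0 ∧ (θ ⟨n, hNA h⟩).y = 0) (n m : G)
    (hn : n ∈ N) (hm : m ∈ N) : zz A θ (n * m) = zz A θ n + zz A θ m := by
  unfold zz
  rw [dif_pos (hNA (N.mul_mem hn hm)), dif_pos (hNA hn), dif_pos (hNA hm)]
  rw [show (⟨n * m, hNA (N.mul_mem hn hm)⟩ : A) = ⟨n, hNA hn⟩ * ⟨m, hNA hm⟩ from rfl, map_mul,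
    Heis.mul_def]
  simp [hθ n hn]

lemma zz_conj (A N : Subgroup G) (θ : A →* Heis) (hNA : N ≤ A)
    (hθ : ∀ n (h : n ∈ N), (θ ⟨n, hNA h⟩).x = 0 ∧ (θ ⟨n, hNA h⟩).y = 0) (n a : G)
    (hn : n ∈ N) (ha : a ∈ A) : zz A θ (a⁻¹ * n * a) = zz A θ n := by
  unfold zz
  rw [dif_pos (A.mul_mem (A.mul_mem (A.inv_mem ha) (hNA hn)) ha), dif_pos (hNA hn)]
  rw [show (⟨a⁻¹ * n * a, (A.mul_mem (A.mul_mem (A.inv_mem ha) (hNA hn)) ha)⟩ : A) =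
    (⟨a, ha⟩ : A)⁻¹ * ⟨n, hNA hn⟩ * ⟨a, ha⟩ from rfl, map_mul, map_mul, map_inv]
  obtain ⟨h1, h2⟩ := hθ n hn
  simp only [Heis.mul_def, Heis.inv_def, h1, h2]
  ring

end Algebra

section Area
variable {S : Type*} [DecidableEq S]

lemma area_exists (A N : Subgroup (FreeGroup S)) [hN : N.Normal] (θ : A →* Heis) (hNA : N ≤ A)
    (hθ : ∀ n (h : n ∈ N), (θ ⟨n, hNA h⟩).x = 0 ∧ (θ ⟨n, hNA h⟩).y = 0) :
    AreaData N (fun (k : FreeGroup S ⧸ A) (n : FreeGroup S) =>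
      zz A θ ((Quotient.out k)⁻¹ * n * Quotient.out k)) where
  add := by
    intro k n hn m hm
    have c : ∀ n ∈ N, (Quotient.out k)⁻¹ * n * Quotient.out k ∈ N := by
      intro n hn
      simpa using hN.conj_mem n hn (Quotient.out k)⁻¹
    show zz A θ _ = zz A θ _ + zz A θ _
    rw [← zz_add A N θ hNA hθ _ _ (c n hn) (c m hm)]
    congr 1
    group
  conj := by
    intro k s n hn
    have c : (Quotient.out k)⁻¹ * n * Quotient.out k ∈ N := by
      simpa using hN.conj_mem n hn (Quotient.out k)⁻¹
    set t := Quotient.out k with ht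
    set t' := Quotient.out (s⁻¹ • k) with ht'
    have h1 : (QuotientGroup.mk t' : FreeGroup S ⧸ A) = s⁻¹ • k := QuotientGroup.out_eq' _
    have h2 : (QuotientGroup.mk t : FreeGroup S ⧸ A) = k := QuotientGroup.out_eq' _
    have h3 : (QuotientGroup.mk (s⁻¹ * t) : FreeGroup S ⧸ A) = QuotientGroup.mk t' := by
      rw [h1, ← h2]; rfl
    have h4 := QuotientGroup.eq.mp h3
    show zz A θ _ = zz A θ _
    rw [← zz_conj A N θ hNA hθ _ _ c h4]
    congr 1
    group

lemma act_trivial (A N : Subgroup (FreeGroup S)) [hN : N.Normal] (hNA : N ≤ A) (n : FreeGroup S)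
    (hn : n ∈ N) (k : FreeGroup S ⧸ A) : n • k = k := by
  induction k using QuotientGroup.induction_on with
  | H g =>
    show (QuotientGroup.mk (n * g) : FreeGroup S ⧸ A) = QuotientGroup.mk g
    rw [eq_comm, QuotientGroup.eq]
    apply hNA
    have := hN.conj_mem n hn g⁻¹
    simpa [mul_assoc] using this

lemma no_Z2 {R : Set (FreeGroup S)} {W : Set (List (S × Bool))} (hW : SCW W)
    (hR : ∀ r ∈ R, ∃ w ∈ W, FreeGroup.mk w = r) (hWR : ∀ w ∈ W, FreeGroup.mk w ∈ R)
    (hRi : ∀ r ∈ R, r⁻¹ ∈ R)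
    (ρ : Multiplicative ℤ × Multiplicative ℤ →* PresentedGroup R) (hρ : Injective ρ) : False := by
  let q : FreeGroup S →* PresentedGroup R := PresentedGroup.mk R
  let N : Subgroup (FreeGroup S) := Subgroup.normalClosure R
  let A : Subgroup (FreeGroup S) := ρ.range.comap q
  have : N.Normal := Subgroup.normalClosure_normal
  have hq1 : ∀ n ∈ N, q n = 1 := fun n hn => (QuotientGroup.eq_one_iff n).mpr hn
  have hq2 : ∀ n, q n = 1 → n ∈ N := fun n hn => (QuotientGroup.eq_one_iff n).mp hn
  have hNA : N ≤ A := by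
    intro n hn
    show q n ∈ ρ.range
    rw [hq1 n hn]; exact one_mem _
  let τ : A →* Multiplicative ℤ × Multiplicative ℤ :=
    (MonoidHom.ofInjective hρ).symm.toMonoidHom.comp (q.subgroupComap ρ.range)
  have hτ : ∀ a : A, ρ (τ a) = q a := by
    intro a
    have := (MonoidHom.ofInjective hρ).apply_symm_apply (q.subgroupComap ρ.range a)
    exact congrArg Subtype.val this
  have : IsFreeGroup A := inferInstance
  obtain ⟨θ, hθ⟩ := Heis.lift_exists A τ
  have hθ' : ∀ a, ((θ a).x, (θ a).y) = ((τ a).1.toAdd, (τ a).2.toAdd) := by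
    intro a
    rw [← hθ]; rfl
  have hθN : ∀ n (h : n ∈ N), (θ ⟨n, hNA h⟩).x = 0 ∧ (θ ⟨n, hNA h⟩).y = 0 := by
    intro n h
    have h1 : τ ⟨n, hNA h⟩ = 1 := by
      apply hρ
      rw [hτ, map_one]
      exact hq1 n h
    have h2 := hθ' ⟨n, hNA h⟩
    rw [h1] at h2
    exact ⟨congrArg Prod.fst h2, congrArg Prod.snd h2⟩
  obtain ⟨a, ha⟩ := QuotientGroup.mk_surjective (s := N) (ρ (Multiplicative.ofAdd 1, 1))
  obtain ⟨b, hb⟩ := QuotientGroup.mk_surjective (s := N) (ρ (1, Multiplicative.ofAdd 1))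
  have ha' : q a = ρ (Multiplicative.ofAdd 1, 1) := ha
  have hb' : q b = ρ (1, Multiplicative.ofAdd 1) := hb
  have haA : a ∈ A := ⟨_, ha'.symm⟩
  have hbA : b ∈ A := ⟨_, hb'.symm⟩
  have hτa : τ ⟨a, haA⟩ = (Multiplicative.ofAdd 1, 1) := hρ (by rw [hτ]; exact ha')
  have hτb : τ ⟨b, hbA⟩ = (1, Multiplicative.ofAdd 1) := hρ (by rw [hτ]; exact hb')
  have hab : a * b * (a⁻¹ * b⁻¹) ∈ N := by
    apply hq2
    rw [map_mul, map_mul, map_mul, map_inv, map_inv, ha', hb', ← map_mul, ← map_inv, ← map_inv,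
      ← map_mul, ← map_mul]
    convert map_one ρ
    rfl
  have fix : ∀ g ∈ A, g • (QuotientGroup.mk 1 : FreeGroup S ⧸ A) = QuotientGroup.mk 1 := by
    intro g hg
    show (QuotientGroup.mk (g * 1) : FreeGroup S ⧸ A) = QuotientGroup.mk 1
    rw [eq_comm, QuotientGroup.eq]
    simpa using hg
  have key := no_torus hW (area_exists A N θ hNA hθN)
    (fun w hw => Subgroup.subset_normalClosure (hWR w hw))
    (act_trivial A N hNA) hR hRi rfl a b (QuotientGroup.mk 1) (fix a haA) (fix b hbA) hab
  have hout : Quotient.out (QuotientGroup.mk 1 : FreeGroup S ⧸ A) ∈ A := by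
    have : (QuotientGroup.mk (Quotient.out (QuotientGroup.mk 1 : FreeGroup S ⧸ A)) :
      FreeGroup S ⧸ A) = QuotientGroup.mk 1 := QuotientGroup.out_eq' _
    rw [eq_comm, QuotientGroup.eq] at this
    simpa using this
  have key2 : zz A θ (a * b * (a⁻¹ * b⁻¹)) = 0 := by
    rw [← zz_conj A N θ hNA hθN _ _ hab hout]
    exact key
  unfold zz at key2
  rw [dif_pos (hNA hab), show (⟨a * b * (a⁻¹ * b⁻¹), hNA hab⟩ : A) =
    ⟨a, haA⟩ * ⟨b, hbA⟩ * ((⟨a, haA⟩ : A)⁻¹ * (⟨b, hbA⟩ : A)⁻¹) from rfl, map_mul, map_mul, map_mul,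
    map_inv, map_inv] at key2
  have h1 := hθ' ⟨a, haA⟩
  have h2 := hθ' ⟨b, hbA⟩
  rw [hτa] at h1
  rw [hτb] at h2
  have h1x : (θ ⟨a, haA⟩).x = 1 := congrArg Prod.fst h1
  have h1y : (θ ⟨a, haA⟩).y = 0 := congrArg Prod.snd h1
  have h2x : (θ ⟨b, hbA⟩).x = 0 := congrArg Prod.fst h2
  have h2y : (θ ⟨b, hbA⟩).y = 1 := congrArg Prod.snd h2
  simp only [Heis.mul_def, Heis.inv_def, h1x, h1y, h2x, h2y] at key2
  omega

lemma zpow_free_inj : Injective (zpowersHom (FreeGroup (Fin 2)) (FreeGroup.of 0)) := by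
  intro m n h
  have := congrArg (FreeGroup.lift (fun _ : Fin 2 => Multiplicative.ofAdd (1 : ℤ))) h
  simp only [zpowersHom_apply, map_zpow, FreeGroup.lift_apply_of] at this
  rw [← ofAdd_zsmul, ← ofAdd_zsmul] at this
  simpa using this

end Area
end SC


/-- A C′(1/6) small-cancellation group contains no subgroup isomorphic to
`F₂ × F₂`. -/
theorem cPrimeSixth_no_subgroup_F2_prod_F2 {S : Type*} [DecidableEq S]
    (R : Set (FreeGroup S)) (hSym : FG.Symmetrized R)
    (hC' : FG.CPrimeSixth R) :
    ¬ ∃ H : Subgroup (PresentedGroup R),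
        Nonempty (H ≃* (FreeGroup (Fin 2) × FreeGroup (Fin 2))) := by
  rintro ⟨H, ⟨E⟩⟩
  let j := MonoidHom.prodMap (zpowersHom (FreeGroup (Fin 2)) (FreeGroup.of 0))
    (zpowersHom (FreeGroup (Fin 2)) (FreeGroup.of 0))
  have hj : Function.Injective j :=
    Function.Injective.prodMap SC.zpow_free_inj SC.zpow_free_inj
  refine SC.no_Z2 (SC.scw_of hSym hC') ?_ (fun w hw => hw.2) ?_
    (H.subtype.comp (E.symm.toMonoidHom.comp j)) ?_
  · intro r hr
    exact ⟨r.toWord, ⟨FreeGroup.isReduced_toWord, by rw [FreeGroup.mk_toWord]; exact hr⟩,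
      FreeGroup.mk_toWord⟩
  · exact fun r hr => hSym.2.1 r hr
  · exact (Subtype.val_injective).comp (E.symm.injective.comp hj)
end

section
/- The group F₂ × F₂ does not split as a nontrivial free product: there do not exist groups A and B, each having more than one element, such that F₂ × F₂ is isomorphic to the free product A ∗ B. -/
open Monoid CoprodI

/-- The two-member family of groups. -/
def Fam (A B : Type) : Bool → Type
  | true => A
  | false => B

instance famGroup (A B : Type) [gA : Group A] [gB : Group B] : ∀ i, Group (Fam A B i)
  | true => gA
  | false => gB

/-- The inclusions of the two members. -/
def famHoms (A B : Type) [Group A] [Group B] : ∀ i, Fam A B i →* Monoid.Coprod A B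
  | true => (Monoid.Coprod.inl : A →* Monoid.Coprod A B)
  | false => (Monoid.Coprod.inr : B →* Monoid.Coprod A B)

/-- The binary free product as an indexed one. -/
noncomputable def coprodEquivFam (A B : Type) [Group A] [Group B] :
    Monoid.Coprod A B ≃* CoprodI (Fam A B) :=
  MonoidHom.toMulEquiv
    (Monoid.Coprod.lift (CoprodI.of (M := Fam A B) (i := true))
      (CoprodI.of (M := Fam A B) (i := false)))
    (CoprodI.lift (M := Fam A B) (famHoms A B))
    (by
      apply Monoid.Coprod.hom_ext
      · ext x
        exact DFunLike.congr_fun (CoprodI.lift_comp_of (M := Fam A B) (famHoms A B) true) x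
      · ext x
        exact DFunLike.congr_fun (CoprodI.lift_comp_of (M := Fam A B) (famHoms A B) false) x)
    (by
      apply CoprodI.ext_hom
      intro i
      cases i
      · ext x
        simp only [MonoidHom.comp_apply, CoprodI.lift_of]
        exact Monoid.Coprod.lift_apply_inr _ _ _
      · ext x
        simp only [MonoidHom.comp_apply, CoprodI.lift_of]
        exact Monoid.Coprod.lift_apply_inl _ _ _)

section
variable {H : Bool → Type} [∀ i, Group (H i)]

open Classical in
/-- The normal form list. -/
noncomputable def nfl (g : CoprodI H) : List (Σ i, H i) := (CoprodI.Word.equiv g).toList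

lemma nfl_prod (w : CoprodI.Word H) : nfl w.prod = w.toList := by
  classical
  unfold nfl
  congr 1
  exact CoprodI.Word.equiv.apply_symm_apply w

lemma nfl_ne {i j} (w : NeWord H i j) : nfl w.prod = w.toList := nfl_prod w.toWord

lemma ne_of_ne_one (g : CoprodI H) (h : g ≠ 1) : ∃ i j, ∃ w : NeWord H i j, w.prod = g := by
  classical
  obtain ⟨i, j, w, hw⟩ := NeWord.of_word (CoprodI.Word.equiv g) (by
    intro h'
    apply h
    have := CoprodI.Word.equiv.symm_apply_apply g
    rw [h'] at this
    rw [← this]; rfl)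
  refine ⟨i, j, w, ?_⟩
  unfold NeWord.prod
  rw [hw]
  exact CoprodI.Word.equiv.symm_apply_apply g

lemma nfl_of_mul {i k} (m : H i) (w : NeWord H i k) :
    (nfl (CoprodI.of m * w.prod)).length ≤ (nfl w.prod).length := by
  classical
  by_cases h1 : m * w.head = 1
  · have hl := w.toList_head?
    obtain ⟨l, hl'⟩ : ∃ l, w.toList = ⟨i, w.head⟩ :: l := by
      cases h : w.toList with
      | nil => simp [h] at hl
      | cons a l => rw [h] at hl; simp at hl; exact ⟨l, by rw [hl]⟩
    let w' : CoprodI.Word H := ⟨l, fun x hx => w.toWord.ne_one x (by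
      change x ∈ w.toList; rw [hl']; exact List.mem_cons_of_mem _ hx), by
      have := w.toWord.chain_ne
      change List.IsChain _ w.toList at this
      rw [hl'] at this
      exact this.tail⟩
    have : CoprodI.of m * w.prod = w'.prod := by
      have h2 : w.prod = CoprodI.of w.head * w'.prod := by
        unfold NeWord.prod CoprodI.Word.prod
        change (List.map _ w.toList).prod = _
        rw [hl']; simp [w']
      rw [h2, ← mul_assoc, ← map_mul, h1, map_one, one_mul]
    rw [this, nfl_prod, nfl_ne, hl']
    simp [w']
  · rw [← NeWord.mulHead_prod w m h1, nfl_ne, nfl_ne]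
    have : ∀ {i j} (w : NeWord H i j) (x : H i) hx,
        (w.replaceHead x hx).toList.length = w.toList.length := by
      intro i j w
      induction w with
      | singleton => intros; rfl
      | append w₁ hne w₂ ih1 ih2 =>
        intro x hx
        simp [NeWord.replaceHead, NeWord.toList, ih1]
    unfold NeWord.mulHead
    rw [this]

lemma nfl_of_mul_le {i} (m : H i) (g : CoprodI H) :
    (nfl (CoprodI.of m * g)).length ≤ (nfl g).length + 1 := by
  classical
  by_cases hm : m = 1
  · simp [hm]
  by_cases hg : g = 1
  · subst hg
    rw [mul_one, ← NeWord.prod_singleton m hm, nfl_ne]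
    simp [NeWord.toList]
  obtain ⟨j, k, w, rfl⟩ := ne_of_ne_one g hg
  by_cases hij : i = j
  · subst hij
    exact (nfl_of_mul m w).trans (Nat.le_succ _)
  · have := NeWord.append_prod (w₁ := NeWord.singleton m hm) (hne := hij) (w₂ := w)
    rw [NeWord.prod_singleton] at this
    rw [← this, nfl_ne, nfl_ne]
    simp [NeWord.toList]

lemma nfl_inv (g : CoprodI H) : (nfl g⁻¹).length = (nfl g).length := by
  by_cases hg : g = 1
  · simp [hg]
  obtain ⟨j, k, w, rfl⟩ := ne_of_ne_one g hg
  rw [← NeWord.inv_prod, nfl_ne, nfl_ne]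
  induction w with
  | singleton => rfl
  | append w₁ hne w₂ ih1 ih2 =>
    have h1 : ∀ {i j} (w : NeWord H i j), w.inv.toList.length = w.toList.length := by
      intro i j w
      induction w with
      | singleton => rfl
      | append w₁ hne w₂ ih1 ih2 => simp [NeWord.inv, NeWord.toList, ih1, ih2]; omega
    exact h1 _

lemma step_tf (a : H true) (b : H false) (ha : a ≠ 1) (hb : b ≠ 1)
    (w : NeWord H true false)
    (hc : w.prod * (CoprodI.of a * CoprodI.of b) = (CoprodI.of a * CoprodI.of b) * w.prod) :
    ∃ z', w.prod = (CoprodI.of a * CoprodI.of b) * z' ∧ (nfl z').length < (nfl w.prod).length := by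
  let u : NeWord H true false :=
    NeWord.append (NeWord.singleton a ha) (by decide) (NeWord.singleton b hb)
  have hu : u.prod = CoprodI.of a * CoprodI.of b := by simp [u]
  have e : (NeWord.append w (by decide) u).prod = (NeWord.append u (by decide) w).prod := by
    rw [NeWord.append_prod (w₁ := w), NeWord.append_prod (w₁ := u), hu, hc]
  have e2 := congrArg nfl e
  rw [nfl_ne, nfl_ne] at e2
  simp only [NeWord.toList, u, List.cons_append, List.nil_append] at e2
  obtain ⟨l, hl⟩ : ∃ l, w.toList = ⟨true, a⟩ :: ⟨false, b⟩ :: l := by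
    match h : w.toList with
    | [] => exact absurd h w.toList_ne_nil
    | [x] =>
      rw [h] at e2
      simp at e2
    | x :: y :: l =>
      rw [h] at e2
      simp only [List.cons_append, List.cons.injEq] at e2
      exact ⟨l, by rw [e2.1, e2.2.1]⟩
  let w' : CoprodI.Word H := ⟨l, fun x hx => w.toWord.ne_one x (by
    change x ∈ w.toList; rw [hl]; exact List.mem_cons_of_mem _ (List.mem_cons_of_mem _ hx)), by
    have := w.toWord.chain_ne
    change List.IsChain _ w.toList at this
    rw [hl] at this
    exact this.tail.tail⟩
  refine ⟨w'.prod, ?_, ?_⟩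
  · unfold NeWord.prod CoprodI.Word.prod
    change (List.map _ w.toList).prod = _
    rw [hl]; simp [w', mul_assoc]
  · rw [nfl_prod, nfl_ne, hl]; simp [w']

lemma centralizer_cyclic (a : H true) (b : H false) (ha : a ≠ 1) (hb : b ≠ 1) :
    ∀ (n : ℕ) (z : CoprodI H), (nfl z).length = n →
      Commute z (CoprodI.of a * CoprodI.of b) →
      z ∈ Subgroup.zpowers (CoprodI.of a * CoprodI.of b : CoprodI H) := by
  intro n
  induction n using Nat.strong_induction_on with
  | _ n ih =>
  intro z hn hc
  let u : NeWord H true false :=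
    NeWord.append (NeWord.singleton a ha) (by decide) (NeWord.singleton b hb)
  have hu : u.prod = CoprodI.of a * CoprodI.of b := by simp [u]
  have key : ∀ w : NeWord H true false, (nfl w.prod).length = n →
      Commute w.prod (CoprodI.of a * CoprodI.of b) →
      w.prod ∈ Subgroup.zpowers (CoprodI.of a * CoprodI.of b : CoprodI H) := by
    intro w hw hcw
    obtain ⟨z', h1, h2⟩ := step_tf a b ha hb w hcw
    have hz' : z' = (CoprodI.of a * CoprodI.of b)⁻¹ * w.prod := by rw [h1]; group
    have := ih _ (hw ▸ h2) z' rfl (by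
      rw [hz']; exact ((Commute.refl _).inv_left).mul_left hcw)
    rw [h1]
    exact Subgroup.mul_mem _ (Subgroup.mem_zpowers _) this
  by_cases hz : z = 1
  · rw [hz]; exact Subgroup.one_mem _
  obtain ⟨i, j, w, rfl⟩ := ne_of_ne_one z hz
  have hul : u.toList.length = 2 := by simp [u, NeWord.toList]
  cases i <;> cases j
  · exfalso
    have e : (NeWord.append w (by decide) u).prod = CoprodI.of a * (CoprodI.of b * w.prod) := by
      rw [NeWord.append_prod (w₁ := w), hu, hc.eq, mul_assoc]
    have e1 := congrArg (fun g => (nfl g).length) e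
    simp only [nfl_ne, NeWord.toList, List.length_append, hul] at e1
    have e2 := nfl_of_mul_le a (CoprodI.of b * w.prod)
    have e3 := nfl_of_mul b w
    rw [nfl_ne] at e3
    omega
  · have := key w.inv (by rw [NeWord.inv_prod, nfl_inv, hn]) (by
      rw [NeWord.inv_prod]; exact hc.inv_left)
    rw [NeWord.inv_prod] at this
    exact (Subgroup.inv_mem_iff _).1 this
  · exact key w hn hc
  · exfalso
    have e : ((NeWord.append u (by decide) w).prod)⁻¹ =
        CoprodI.of b⁻¹ * (CoprodI.of a⁻¹ * w.inv.prod) := by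
      rw [NeWord.append_prod (w₁ := u), hu, ← hc.eq, NeWord.inv_prod, map_inv, map_inv]
      group
    have e1 := congrArg (fun g => (nfl g).length) e
    simp only [nfl_inv] at e1
    simp only [nfl_ne, NeWord.toList, List.length_append, hul] at e1
    have e2 := nfl_of_mul_le b⁻¹ (CoprodI.of a⁻¹ * w.inv.prod)
    have e3 := nfl_of_mul a⁻¹ w.inv
    have e4 := nfl_inv w.prod
    rw [← NeWord.inv_prod, nfl_ne w] at e4
    omega
end

lemma prod_noncyclic (g : FreeGroup (Fin 2) × FreeGroup (Fin 2))
    (h : ∀ z, Commute z g → z ∈ Subgroup.zpowers g) : False := by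
  obtain ⟨x, y⟩ := g
  obtain ⟨t, ht⟩ := exists_ne (1 : FreeGroup (Fin 2))
  by_cases hx : x = 1
  · subst hx
    obtain ⟨n, hn⟩ := h (t, 1) (by simp [Commute, SemiconjBy])
    simp at hn
    exact ht hn.1.symm
  obtain ⟨n, hn⟩ := h (x, 1) (by simp [Commute, SemiconjBy])
  simp at hn
  have hn1 : n = 1 := by
    by_contra hne
    have h0 : x ^ (n - 1) = 1 := by rw [zpow_sub, hn.1]; simp
    exact hx ((IsMulTorsionFree.zpow_eq_one_iff_left (sub_ne_zero.2 hne)).1 h0)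
  subst hn1
  have hy : y = 1 := by simpa using hn.2
  subst hy
  obtain ⟨n, hn⟩ := h (1, t) (by simp [Commute, SemiconjBy])
  simp at hn
  exact ht hn.2.symm

/-- `F₂ × F₂` does not split as a nontrivial free product. -/
theorem F2_prod_F2_freely_indecomposable :
    ∀ (A B : Type) [Group A] [Group B], Nontrivial A → Nontrivial B →
      IsEmpty ((FreeGroup (Fin 2) × FreeGroup (Fin 2)) ≃* Monoid.Coprod A B) := by
  intro A B _ _ hA hB
  refine ⟨fun e => ?_⟩
  let f := e.trans (coprodEquivFam A B)
  obtain ⟨a, ha⟩ := exists_ne (1 : A)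
  obtain ⟨b, hb⟩ := exists_ne (1 : B)
  let c : CoprodI (Fam A B) :=
    CoprodI.of (M := Fam A B) (i := true) a * CoprodI.of (M := Fam A B) (i := false) b
  apply prod_noncyclic (f.symm c)
  intro z hz
  have h1 : Commute (f z) c := by
    have := hz.map f
    rwa [MulEquiv.apply_symm_apply] at this
  obtain ⟨n, hn⟩ := centralizer_cyclic (H := Fam A B) a b ha hb _ (f z) rfl h1
  refine ⟨n, ?_⟩
  apply f.injective
  simp only [map_zpow, MulEquiv.apply_symm_apply]
  exact hn
end
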